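/- Assume f satisfies lim_{R→∞} f(R, R, …, R) = ∞. Suppose u ∈ USC ∩ L^∞([0,T) × cl(Ω)) is a viscosity subsolution and v ∈ LSC ∩ L^∞([0,T) × cl(Ω)) is a viscosity supersolution of F(Hw) = e^{∂_t w + G(t,z,w)} g(z) in Ω_T, and both u and v are locally Lipschitz in the time variable t. Then sup_{Ω_T} (u − v) ≤ sup_{∂_P Ω_T} (u − v)₊, where ∂_P Ω_T = ({0} × cl(Ω)) ∪ ((0,T) × ∂Ω) and (·)₊ = max(·, 0). -/

import Mathlib

open Filter Topology Set

noncomputable section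

/-- The `l`-th elementary symmetric polynomial of `x ∈ ℝⁿ`. -/
def esym (n l : ℕ) (x : Fin n → ℝ) : ℝ :=
  ∑ s ∈ Finset.powersetCard l (Finset.univ : Finset (Fin n)), ∏ i ∈ s, x i

/-- The cone `Γ_k = {x ∈ ℝⁿ : σ_l(x) > 0 for all 1 ≤ l ≤ k}`. -/
def GammaK (n k : ℕ) : Set (Fin n → ℝ) :=
  {x | ∀ l, 1 ≤ l → l ≤ k → 0 < esym n l x}

/-- `Γ ⊊ ℝⁿ` is an open, convex, symmetric cone with vertex `0` and `Γₙ ⊆ Γ ⊆ Γ₁`. -/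
def IsGammaCone (n : ℕ) (Γ : Set (Fin n → ℝ)) : Prop :=
  IsOpen Γ ∧ Convex ℝ Γ ∧ (∀ x ∈ Γ, ∀ t : ℝ, 0 < t → t • x ∈ Γ) ∧
    (∀ σ : Equiv.Perm (Fin n), ∀ x ∈ Γ, x ∘ σ ∈ Γ) ∧
    Γ ≠ Set.univ ∧ GammaK n n ⊆ Γ ∧ Γ ⊆ GammaK n 1

/-- `f : cl(Γ) → [0,∞)` symmetric, concave, strictly increasing in each variable,
vanishing on `∂Γ`. -/
def IsHessianDensity (n : ℕ) (Γ : Set (Fin n → ℝ)) (f : (Fin n → ℝ) → ℝ) : Prop :=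
  (∀ x ∈ closure Γ, 0 ≤ f x) ∧
    (∀ σ : Equiv.Perm (Fin n), ∀ x ∈ closure Γ, f (x ∘ σ) = f x) ∧
    ConcaveOn ℝ (closure Γ) f ∧
    (∀ x ∈ closure Γ, ∀ y ∈ closure Γ, (∀ i, x i ≤ y i) → x ≠ y → f x < f y) ∧
    (∀ x ∈ frontier Γ, f x = 0)

/-- The complex Hessian `(∂²u/∂z_j∂z̄_k)_{j,k}` of a real-valued function on `ℂⁿ`,
computed from the real second derivative. -/
def complexHessian {n : ℕ} (u : (Fin n → ℂ) → ℝ) (z : Fin n → ℂ) :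
    Matrix (Fin n) (Fin n) ℂ := fun j k =>
  (((iteratedFDeriv ℝ 2 u z ![Pi.single j 1, Pi.single k 1] +
        iteratedFDeriv ℝ 2 u z ![Pi.single j Complex.I, Pi.single k Complex.I]) / 4 : ℝ) : ℂ) +
    Complex.I *
      (((iteratedFDeriv ℝ 2 u z ![Pi.single j 1, Pi.single k Complex.I] -
          iteratedFDeriv ℝ 2 u z ![Pi.single j Complex.I, Pi.single k 1]) / 4 : ℝ) : ℂ)

open Classical in
/-- `F(H) = f(λ(H))` if `λ(H) ∈ cl(Γ)` and `F(H) = −∞` otherwise. -/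
def Fop {n : ℕ} (f : (Fin n → ℝ) → ℝ) (Γ : Set (Fin n → ℝ))
    (A : Matrix (Fin n) (Fin n) ℂ) : EReal :=
  if h : A.IsHermitian then
    if h.eigenvalues ∈ closure Γ then ((f h.eigenvalues : ℝ) : EReal) else ⊥
  else ⊥

/-- An upper test function (C¹ in t, C² in z near `p₀`) for `u` at `p₀`. -/
def IsUpperTestAt {n : ℕ} (u q : ℝ × (Fin n → ℂ) → ℝ) (p₀ : ℝ × (Fin n → ℂ)) : Prop :=
  q p₀ = u p₀ ∧ (∀ᶠ p in 𝓝 p₀, u p ≤ q p) ∧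
    ∀ᶠ p in 𝓝 p₀, DifferentiableAt ℝ (fun t => q (t, p.2)) p.1 ∧
      ContDiffAt ℝ 2 (fun z => q (p.1, z)) p.2

/-- A lower test function (C¹ in t, C² in z near `p₀`) for `v` at `p₀`. -/
def IsLowerTestAt {n : ℕ} (v q : ℝ × (Fin n → ℂ) → ℝ) (p₀ : ℝ × (Fin n → ℂ)) : Prop :=
  q p₀ = v p₀ ∧ (∀ᶠ p in 𝓝 p₀, q p ≤ v p) ∧
    ∀ᶠ p in 𝓝 p₀, DifferentiableAt ℝ (fun t => q (t, p.2)) p.1 ∧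
      ContDiffAt ℝ 2 (fun z => q (p.1, z)) p.2

/-- Viscosity subsolution of `F(Hw) = e^{∂ₜw + G(t,z,w)} g(z)` on `D`. -/
def ParSubsolOn {n : ℕ} (f : (Fin n → ℝ) → ℝ) (Γ : Set (Fin n → ℝ))
    (G : ℝ → (Fin n → ℂ) → ℝ → ℝ) (g : (Fin n → ℂ) → ℝ)
    (D : Set (ℝ × (Fin n → ℂ))) (u : ℝ × (Fin n → ℂ) → ℝ) : Prop :=
  UpperSemicontinuousOn u D ∧
    ∀ p₀ ∈ D, ∀ q, IsUpperTestAt u q p₀ →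
      ((Real.exp (deriv (fun t => q (t, p₀.2)) p₀.1 + G p₀.1 p₀.2 (q p₀)) * g p₀.2 : ℝ) : EReal)
        ≤ Fop f Γ (complexHessian (fun z => q (p₀.1, z)) p₀.2)

/-- Viscosity supersolution of `F(Hw) = e^{∂ₜw + G(t,z,w)} g(z)` on `D`. -/
def ParSupersolOn {n : ℕ} (f : (Fin n → ℝ) → ℝ) (Γ : Set (Fin n → ℝ))
    (G : ℝ → (Fin n → ℂ) → ℝ → ℝ) (g : (Fin n → ℂ) → ℝ)
    (D : Set (ℝ × (Fin n → ℂ))) (v : ℝ × (Fin n → ℂ) → ℝ) : Prop :=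
  LowerSemicontinuousOn v D ∧
    ∀ p₀ ∈ D, ∀ q, IsLowerTestAt v q p₀ →
      Fop f Γ (complexHessian (fun z => q (p₀.1, z)) p₀.2)
        ≤ ((Real.exp (deriv (fun t => q (t, p₀.2)) p₀.1 + G p₀.1 p₀.2 (q p₀)) * g p₀.2 : ℝ) : EReal)

/-- Upper semicontinuous envelope relative to `D`. -/
def uscEnvOn {X : Type*} [TopologicalSpace X] (D : Set X) (w : X → ℝ) (x : X) : ℝ :=
  Filter.limsup w (𝓝[D] x)

/-- Lower semicontinuous envelope relative to `D`. -/
def lscEnvOn {X : Type*} [TopologicalSpace X] (D : Set X) (w : X → ℝ) (x : X) : ℝ :=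
  Filter.liminf w (𝓝[D] x)

/-- Sup-convolution in time `u^k`. -/
def supConv {n : ℕ} (u : ℝ × (Fin n → ℂ) → ℝ) (A k : ℝ) (p : ℝ × (Fin n → ℂ)) : ℝ :=
  sSup ((fun s : ℝ => u (p.1 + s, p.2) - k * |s|) '' Set.Icc (-(A / k)) (A / k))

/-- Inf-convolution in time `u_k`. -/
def infConv {n : ℕ} (u : ℝ × (Fin n → ℂ) → ℝ) (A k : ℝ) (p : ℝ × (Fin n → ℂ)) : ℝ :=
  sInf ((fun s : ℝ => u (p.1 + s, p.2) + k * |s|) '' Set.Icc (-(A / k)) (A / k))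

/-- Parabolic superjet `𝒫^{2,+} u (p₀)`; `p` and `Q` are the ℝ-linear first- and
second-order data on `ℂⁿ ≅ ℝ^{2n}`. -/
def InParSuperjet {n : ℕ} (u : ℝ × (Fin n → ℂ) → ℝ) (p₀ : ℝ × (Fin n → ℂ)) (τ : ℝ)
    (p : (Fin n → ℂ) →ₗ[ℝ] ℝ) (Q : (Fin n → ℂ) →ₗ[ℝ] (Fin n → ℂ) →ₗ[ℝ] ℝ) : Prop :=
  ∀ ε > 0, ∀ᶠ x in 𝓝 p₀,
    u x ≤ u p₀ + τ * (x.1 - p₀.1) + p (x.2 - p₀.2) +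
      (1 / 2) * Q (x.2 - p₀.2) (x.2 - p₀.2) + ε * (|x.1 - p₀.1| + ‖x.2 - p₀.2‖ ^ 2)

/-- Parabolic subjet `𝒫^{2,−} v (p₀) = −𝒫^{2,+}(−v)(p₀)`. -/
def InParSubjet {n : ℕ} (v : ℝ × (Fin n → ℂ) → ℝ) (p₀ : ℝ × (Fin n → ℂ)) (τ : ℝ)
    (p : (Fin n → ℂ) →ₗ[ℝ] ℝ) (Q : (Fin n → ℂ) →ₗ[ℝ] (Fin n → ℂ) →ₗ[ℝ] ℝ) : Prop :=
  InParSuperjet (fun x => -(v x)) p₀ (-τ) (-p) (-Q)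

/-- An upper test function (C² near `z₀`) for `ψ` at `z₀` (elliptic case). -/
def IsUpperTestAtE {n : ℕ} (ψ q : (Fin n → ℂ) → ℝ) (z₀ : Fin n → ℂ) : Prop :=
  q z₀ = ψ z₀ ∧ (∀ᶠ z in 𝓝 z₀, ψ z ≤ q z) ∧ ContDiffAt ℝ 2 q z₀

/-- A lower test function (C² near `z₀`) for `ψ` at `z₀` (elliptic case). -/
def IsLowerTestAtE {n : ℕ} (ψ q : (Fin n → ℂ) → ℝ) (z₀ : Fin n → ℂ) : Prop :=
  q z₀ = ψ z₀ ∧ (∀ᶠ z in 𝓝 z₀, q z ≤ ψ z) ∧ ContDiffAt ℝ 2 q z₀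

/-- `ψ` is `Γ`-subharmonic on `D` in the viscosity sense: `F(Hψ) ≥ 0`. -/
def GammaSubharmonicOn {n : ℕ} (Γ : Set (Fin n → ℝ)) (D : Set (Fin n → ℂ))
    (ψ : (Fin n → ℂ) → ℝ) : Prop :=
  ∀ z₀ ∈ D, ∀ q, IsUpperTestAtE ψ q z₀ →
    ∃ hh : (complexHessian q z₀).IsHermitian, hh.eigenvalues ∈ closure Γ

/-- Viscosity subsolution of the elliptic equation `e^{K(z,ψ)} − F(Hψ) = 0` on `D`,
where the right-hand side `K z₀ (q z₀)` may depend on the tested value. -/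
def EllSubsolOn {n : ℕ} (f : (Fin n → ℝ) → ℝ) (Γ : Set (Fin n → ℝ))
    (K : (Fin n → ℂ) → ℝ → ℝ) (D : Set (Fin n → ℂ)) (ψ : (Fin n → ℂ) → ℝ) : Prop :=
  UpperSemicontinuousOn ψ D ∧
    ∀ z₀ ∈ D, ∀ q, IsUpperTestAtE ψ q z₀ →
      ((K z₀ (q z₀) : ℝ) : EReal) ≤ Fop f Γ (complexHessian q z₀)

/-- Viscosity subsolution of the time-derivative-free parabolic equation
`e^{H(t,z,w)} h(t,z) − F(Hw) = 0` on `D`. -/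
def ParSubsolNoDtOn {n : ℕ} (f : (Fin n → ℝ) → ℝ) (Γ : Set (Fin n → ℝ))
    (Hf : ℝ → (Fin n → ℂ) → ℝ → ℝ) (h : ℝ × (Fin n → ℂ) → ℝ)
    (D : Set (ℝ × (Fin n → ℂ))) (w : ℝ × (Fin n → ℂ) → ℝ) : Prop :=
  UpperSemicontinuousOn w D ∧
    ∀ p₀ ∈ D, ∀ q, IsUpperTestAt w q p₀ →
      ((Real.exp (Hf p₀.1 p₀.2 (q p₀)) * h p₀ : ℝ) : EReal)
        ≤ Fop f Γ (complexHessian (fun z => q (p₀.1, z)) p₀.2)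

/-- Subsolution of the Cauchy–Dirichlet problem. -/
def CDSubsol {n : ℕ} (f : (Fin n → ℝ) → ℝ) (Γ : Set (Fin n → ℝ))
    (G : ℝ → (Fin n → ℂ) → ℝ → ℝ) (g : (Fin n → ℂ) → ℝ)
    (Ω : Set (Fin n → ℂ)) (T : ℝ) (φ : ℝ → (Fin n → ℂ) → ℝ)
    (u₀ : (Fin n → ℂ) → ℝ) (u : ℝ × (Fin n → ℂ) → ℝ) : Prop :=
  UpperSemicontinuousOn u (Set.Ico 0 T ×ˢ closure Ω) ∧
    ParSubsolOn f Γ G g (Set.Ioo 0 T ×ˢ Ω) u ∧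
    (∀ t ∈ Set.Ico (0 : ℝ) T, ∀ z ∈ frontier Ω, u (t, z) ≤ φ t z) ∧
    (∀ z ∈ closure Ω, u (0, z) ≤ u₀ z)

/-- Supersolution of the Cauchy–Dirichlet problem. -/
def CDSupersol {n : ℕ} (f : (Fin n → ℝ) → ℝ) (Γ : Set (Fin n → ℝ))
    (G : ℝ → (Fin n → ℂ) → ℝ → ℝ) (g : (Fin n → ℂ) → ℝ)
    (Ω : Set (Fin n → ℂ)) (T : ℝ) (φ : ℝ → (Fin n → ℂ) → ℝ)
    (u₀ : (Fin n → ℂ) → ℝ) (v : ℝ × (Fin n → ℂ) → ℝ) : Prop :=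
  LowerSemicontinuousOn v (Set.Ico 0 T ×ˢ closure Ω) ∧
    ParSupersolOn f Γ G g (Set.Ioo 0 T ×ˢ Ω) v ∧
    (∀ t ∈ Set.Ico (0 : ℝ) T, ∀ z ∈ frontier Ω, φ t z ≤ v (t, z)) ∧
    (∀ z ∈ closure Ω, u₀ z ≤ v (0, z))

/-- `ε`-subbarrier for the Cauchy–Dirichlet problem. -/
def SubBarrier {n : ℕ} (f : (Fin n → ℝ) → ℝ) (Γ : Set (Fin n → ℝ))
    (G : ℝ → (Fin n → ℂ) → ℝ → ℝ) (g : (Fin n → ℂ) → ℝ)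
    (Ω : Set (Fin n → ℂ)) (T : ℝ) (φ : ℝ → (Fin n → ℂ) → ℝ)
    (u₀ : (Fin n → ℂ) → ℝ) (ε : ℝ) (u : ℝ × (Fin n → ℂ) → ℝ) : Prop :=
  UpperSemicontinuousOn u (Set.Ico 0 T ×ˢ closure Ω) ∧
    ParSubsolOn f Γ G g (Set.Ioo 0 T ×ˢ Ω) u ∧
    (∀ z ∈ closure Ω,
      u₀ z - ε ≤ lscEnvOn (Set.Ico 0 T ×ˢ closure Ω) u (0, z) ∧
        lscEnvOn (Set.Ico 0 T ×ˢ closure Ω) u (0, z) ≤ u (0, z) ∧ u (0, z) ≤ u₀ z) ∧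
    (∀ t ∈ Set.Ico (0 : ℝ) T, ∀ z ∈ frontier Ω,
      φ t z - ε ≤ lscEnvOn (Set.Ico 0 T ×ˢ closure Ω) u (t, z) ∧
        lscEnvOn (Set.Ico 0 T ×ˢ closure Ω) u (t, z) ≤ u (t, z) ∧ u (t, z) ≤ φ t z)

/-- `ε`-superbarrier for the Cauchy–Dirichlet problem. -/
def SuperBarrier {n : ℕ} (f : (Fin n → ℝ) → ℝ) (Γ : Set (Fin n → ℝ))
    (G : ℝ → (Fin n → ℂ) → ℝ → ℝ) (g : (Fin n → ℂ) → ℝ)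
    (Ω : Set (Fin n → ℂ)) (T : ℝ) (φ : ℝ → (Fin n → ℂ) → ℝ)
    (u₀ : (Fin n → ℂ) → ℝ) (ε : ℝ) (v : ℝ × (Fin n → ℂ) → ℝ) : Prop :=
  LowerSemicontinuousOn v (Set.Ico 0 T ×ˢ closure Ω) ∧
    ParSupersolOn f Γ G g (Set.Ioo 0 T ×ˢ Ω) v ∧
    (∀ z ∈ closure Ω,
      uscEnvOn (Set.Ico 0 T ×ˢ closure Ω) v (0, z) ≤ u₀ z + ε ∧
        v (0, z) ≤ uscEnvOn (Set.Ico 0 T ×ˢ closure Ω) v (0, z) ∧ u₀ z ≤ v (0, z)) ∧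
    (∀ t ∈ Set.Ico (0 : ℝ) T, ∀ z ∈ frontier Ω,
      uscEnvOn (Set.Ico 0 T ×ˢ closure Ω) v (t, z) ≤ φ t z + ε ∧
        v (t, z) ≤ uscEnvOn (Set.Ico 0 T ×ˢ closure Ω) v (t, z) ∧ φ t z ≤ v (t, z))

/-- Lipschitz in the time variable, uniformly on `[0,T) × cl(Ω)`. -/
def LipschitzInT {n : ℕ} (Ω : Set (Fin n → ℂ)) (T : ℝ) (u : ℝ × (Fin n → ℂ) → ℝ) : Prop :=
  ∃ L : ℝ, ∀ t₁ ∈ Set.Ico (0 : ℝ) T, ∀ t₂ ∈ Set.Ico (0 : ℝ) T, ∀ z ∈ closure Ω,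
    |u (t₁, z) - u (t₂, z)| ≤ L * |t₁ - t₂|

/-- The pair `(u₀, g)` is admissible. -/
def Admissible {n : ℕ} (f : (Fin n → ℝ) → ℝ) (Γ : Set (Fin n → ℝ))
    (Ω : Set (Fin n → ℂ)) (g u₀ : (Fin n → ℂ) → ℝ) : Prop :=
  ∀ ε > 0, ∃ uε : (Fin n → ℂ) → ℝ, ∃ Cε > 0,
    ContinuousOn uε (closure Ω) ∧ (∀ z ∈ closure Ω, u₀ z ≤ uε z ∧ uε z ≤ u₀ z + ε) ∧
      ∀ z₀ ∈ Ω, ∀ q, IsLowerTestAtE uε q z₀ →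
        Fop f Γ (complexHessian q z₀) ≤ ((Real.exp Cε * g z₀ : ℝ) : EReal)

/-- `Ω` is a strictly `Γ`-pseudoconvex domain. -/
def StrictlyGammaPseudoconvex {n : ℕ} (Γ : Set (Fin n → ℝ)) (Ω : Set (Fin n → ℂ)) : Prop :=
  ∃ ρ : (Fin n → ℂ) → ℝ, ContDiff ℝ (⊤ : ℕ∞) ρ ∧
    (∀ z ∈ closure Ω, ∃ hh : (complexHessian ρ z).IsHermitian, hh.eigenvalues ∈ Γ) ∧
    (∀ z ∈ frontier Ω, ρ z = 0) ∧ (∀ z ∈ Ω, ρ z < 0) ∧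
    ∀ z ∈ frontier Ω, fderiv ℝ ρ z ≠ 0

end


section convexTools
open MeasureTheory
variable {E : Type*} [NormedAddCommGroup E] [InnerProductSpace ℝ E]

theorem cmp_telescope (e : ℝ → ℝ) (A B : ℝ)
    (h : ∀ s t, 0 ≤ s → s ≤ t → t ≤ 1 → |e t - e s| ≤ A * (t - s) + B * (t - s) ^ 2) :
    |e 1 - e 0| ≤ A := by
  have key : ∀ N : ℕ, |e 1 - e 0| ≤ A + B * (1 / ((N : ℝ) + 1)) := by
    intro N
    have hN : (0 : ℝ) < (N : ℝ) + 1 := by positivity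
    have h1 : ∀ m : ℕ, m ≤ N + 1 → |e (m / ((N : ℝ) + 1)) - e 0| ≤
        m * (A * (1 / ((N : ℝ) + 1)) + B * (1 / ((N : ℝ) + 1)) ^ 2) := by
      intro m
      induction m with
      | zero => intro _; simp
      | succ k ih =>
        intro hk
        have ih' := ih (by omega)
        have h2 := h (k / ((N : ℝ) + 1)) ((k + 1 : ℕ) / ((N : ℝ) + 1)) (by positivity)
          (by gcongr; simp) (by rw [div_le_one hN]; exact_mod_cast hk)
        have h3 : ((k + 1 : ℕ) / ((N : ℝ) + 1)) - k / ((N : ℝ) + 1) = 1 / ((N : ℝ) + 1) := by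
          push_cast; ring
        rw [h3] at h2
        have h4 := abs_sub_le (e ((k + 1 : ℕ) / ((N : ℝ) + 1))) (e (k / ((N : ℝ) + 1))) (e 0)
        push_cast at *
        linarith
    have h5 := h1 (N + 1) le_rfl
    have h6 : ((N + 1 : ℕ) : ℝ) / ((N : ℝ) + 1) = 1 := by push_cast; field_simp
    rw [h6] at h5
    have h7 : ((N + 1 : ℕ) : ℝ) * (A * (1 / ((N : ℝ) + 1)) + B * (1 / ((N : ℝ) + 1)) ^ 2)
      = A + B * (1 / ((N : ℝ) + 1)) := by push_cast; field_simp
    linarith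
  have lim : Tendsto (fun N : ℕ => A + B * (1 / ((N : ℝ) + 1))) atTop (𝓝 (A + B * 0)) :=
    (tendsto_one_div_add_atTop_nhds_zero_nat.const_mul B).const_add A
  have := ge_of_tendsto' lim key
  simpa using this

/-- `p` is a subgradient of `φ` at `y`. -/
def CmpSubgrad (φ : E → ℝ) (y p : E) : Prop := ∀ z, φ y + inner ℝ p (z - y) ≤ φ z

theorem cmp_subgrad_mono {φ : E → ℝ} {y p y' p' : E} (h : CmpSubgrad φ y p)
    (h' : CmpSubgrad φ y' p') : 0 ≤ inner ℝ (p' - p) (y' - y) := by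
  have h1 := h y'
  have h2 := h' y
  have : inner ℝ p' (y - y') = - inner ℝ p' (y' - y) := by
    rw [← inner_neg_right]; congr 1; abel
  rw [inner_sub_left]
  linarith

/-- existence of the proximal point -/
theorem cmp_prox [FiniteDimensional ℝ E] {φ : E → ℝ} {C : ℝ}
    (hφ : ∀ y, ∃ p, ‖p‖ ≤ C ∧ CmpSubgrad φ y p) (hc : Continuous φ) (x : E) :
    ∃ y, CmpSubgrad φ y (x - y) := by
  obtain ⟨p0, hp0, hs0⟩ := hφ x
  have hcont : Continuous (fun y => φ y + (1 / 2) * ‖x - y‖ ^ 2) := by fun_prop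
  obtain ⟨y, hy⟩ := hcont.exists_forall_le' x (by
    have : ∀ᶠ y in cocompact E, 2 * C ≤ dist y x :=
      (tendsto_dist_left_cocompact_atTop x).eventually_ge_atTop _ |>.mono
        (fun y hy => by simpa [dist_comm] using hy)
    filter_upwards [this] with y hy
    have h1 := hs0 y
    have h2 : -(C * ‖y - x‖) ≤ inner ℝ p0 (y - x) := by
      have := abs_real_inner_le_norm p0 (y - x)
      have h3 := (abs_le.1 this).1
      have : ‖p0‖ * ‖y - x‖ ≤ C * ‖y - x‖ := by gcongr
      linarith
    rw [dist_eq_norm] at hy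
    have h4 : ‖x - y‖ = ‖y - x‖ := norm_sub_rev _ _
    simp only [sub_self, norm_zero]
    rw [h4]
    nlinarith [norm_nonneg (y - x)])
  refine ⟨y, fun z => ?_⟩
  have key : ∀ t : ℝ, 0 < t → t < 1 →
      φ y + inner ℝ (x - y) (z - y) - t / 2 * ‖z - y‖ ^ 2 ≤ φ z := by
    intro t ht ht1
    set m := y + t • (z - y) with hm
    obtain ⟨p, _, hp⟩ := hφ m
    have h1 := hp y
    have h2 := hp z
    have h3 := hy m
    have e1 : y - m = (-t) • (z - y) := by rw [hm]; module
    have e2 : z - m = (1 - t) • (z - y) := by rw [hm]; module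
    have e3 : x - m = (x - y) - t • (z - y) := by rw [hm]; module
    rw [e1, inner_smul_right] at h1
    rw [e2, inner_smul_right] at h2
    rw [e3, norm_sub_sq_real (x - y) (t • (z - y)), inner_smul_right, norm_smul, mul_pow, Real.norm_eq_abs, sq_abs] at h3
    have h4 : φ m ≤ (1 - t) * φ y + t * φ z := by nlinarith
    have h5 : t * (φ y + inner ℝ (x - y) (z - y) - t / 2 * ‖z - y‖ ^ 2) ≤ t * φ z := by nlinarith
    exact le_of_mul_le_mul_left h5 ht
  have lim : Tendsto (fun t : ℝ => φ y + inner ℝ (x - y) (z - y) - t / 2 * ‖z - y‖ ^ 2) (𝓝[>] 0)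
      (𝓝 (φ y + inner ℝ (x - y) (z - y) - 0 / 2 * ‖z - y‖ ^ 2)) :=
    ((by fun_prop : Continuous (fun t : ℝ => φ y + inner ℝ (x - y) (z - y) - t / 2 * ‖z - y‖ ^ 2)).tendsto
      0).mono_left nhdsWithin_le_nhds
  have := le_of_tendsto lim (by
    filter_upwards [Ioo_mem_nhdsGT (show (0 : ℝ) < 1 by norm_num)] with t ht
    exact key t ht.1 ht.2)
  simpa using this

/-- second order expansion -/
def CmpTwice (φ : E → ℝ) (y p : E) (Q : E →L[ℝ] E) : Prop :=
  ∀ η > 0, ∀ᶠ k in 𝓝 (0 : E), |φ (y + k) - φ y - inner ℝ p k - (1 / 2) * inner ℝ (Q k) k| ≤ η * ‖k‖ ^ 2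

/-- pointwise part of the Alexandrov theorem -/
theorem cmp_alex_pointwise {φ : E → ℝ} {y p : E} {Q : E →L[ℝ] E}
    (hφ : ∀ y, ∃ p, CmpSubgrad φ y p)
    (h : ∀ η > 0, ∃ r > 0, ∀ y' p', ‖y' - y‖ < r → CmpSubgrad φ y' p' →
      ‖p' - p - Q (y' - y)‖ ≤ η * ‖y' - y‖) : CmpTwice φ y p Q := by
  intro η hη
  obtain ⟨r, hr, hr'⟩ := h η hη
  filter_upwards [Metric.ball_mem_nhds (0 : E) hr] with k hk
  rw [mem_ball_zero_iff] at hk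
  choose P hP using hφ
  set e : ℝ → ℝ := fun t => φ (y + t • k) - t * inner ℝ p k - t ^ 2 / 2 * inner ℝ (Q k) k with he
  have hbound : ∀ t, 0 ≤ t → t ≤ 1 →
      |inner ℝ (P (y + t • k)) k - inner ℝ p k - t * inner ℝ (Q k) k| ≤ η * ‖k‖ ^ 2 := by
    intro t ht ht1
    have hn : ‖y + t • k - y‖ ≤ ‖k‖ := by
      rw [add_sub_cancel_left, norm_smul, Real.norm_of_nonneg ht]
      exact mul_le_of_le_one_left (norm_nonneg _) ht1
    have h1 := hr' (y + t • k) (P (y + t • k)) (lt_of_le_of_lt hn hk) (hP _)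
    have h2 : inner ℝ (P (y + t • k)) k - inner ℝ p k - t * inner ℝ (Q k) k
        = inner ℝ (P (y + t • k) - p - Q (y + t • k - y)) k := by
      rw [add_sub_cancel_left, map_smul, inner_sub_left, inner_sub_left, inner_smul_left]
      simp
    rw [h2]
    calc _ ≤ ‖P (y + t • k) - p - Q (y + t • k - y)‖ * ‖k‖ := abs_real_inner_le_norm _ _
      _ ≤ (η * ‖y + t • k - y‖) * ‖k‖ := by gcongr
      _ ≤ (η * ‖k‖) * ‖k‖ := by gcongr
      _ = _ := by ring
  have := cmp_telescope e (η * ‖k‖ ^ 2) (|inner ℝ (Q k) k|) (by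
    intro s t hs hst ht
    have h1 := hP (y + s • k) (y + t • k)
    have h2 := hP (y + t • k) (y + s • k)
    have e1 : y + t • k - (y + s • k) = (t - s) • k := by module
    have e2 : y + s • k - (y + t • k) = (-(t - s)) • k := by module
    rw [e1, inner_smul_right] at h1
    rw [e2, inner_smul_right] at h2
    have b1 := abs_le.1 (hbound s hs (hst.trans ht))
    have b2 := abs_le.1 (hbound t (hs.trans hst) ht)
    have hd : 0 ≤ t - s := by linarith
    have hq1 := le_abs_self (inner ℝ (Q k) k)
    have hq2 := neg_abs_le (inner ℝ (Q k) k)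
    set q := inner ℝ (Q k) k
    set A := inner ℝ (P (y + s • k)) k
    set B := inner ℝ (P (y + t • k)) k
    set c := inner ℝ p k
    have m1 := mul_le_mul_of_nonneg_left b1.1 hd
    have m2 := mul_le_mul_of_nonneg_left b2.2 hd
    have q1 := mul_le_mul_of_nonneg_left hq1 (sq_nonneg (t - s))
    have q2 := mul_le_mul_of_nonneg_left hq2 (sq_nonneg (t - s))
    have q3 : 0 ≤ (t - s) ^ 2 * |q| := by positivity
    simp only [he]
    rw [abs_le]
    constructor
    · nlinarith
    · nlinarith)
  simp only [he] at this
  simp only [one_smul, zero_smul, add_zero] at this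
  convert this using 2
  ring

theorem cmp_alexandrov [FiniteDimensional ℝ E] [MeasurableSpace E] [BorelSpace E]
    {φ : E → ℝ} {C : ℝ}
    (hφ : ∀ y, ∃ p, ‖p‖ ≤ C ∧ CmpSubgrad φ y p) (hc : Continuous φ) :
    ∃ S : Set E, Measure.hausdorffMeasure (Module.finrank ℝ E) S = 0 ∧
      ∀ y ∉ S, ∃ p Q, CmpTwice φ y p Q := by
  choose J hJ using fun x => cmp_prox hφ hc x
  have hlip : LipschitzWith 1 J := by
    refine LipschitzWith.of_dist_le_mul fun x x' => ?_
    rw [dist_eq_norm, dist_eq_norm, NNReal.coe_one, one_mul]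
    have h1 := cmp_subgrad_mono (hJ x') (hJ x)
    have h2 : inner ℝ (x - J x - (x' - J x')) (J x - J x') =
        inner ℝ (x - x') (J x - J x') - ‖J x - J x'‖ ^ 2 := by
      rw [← real_inner_self_eq_norm_sq, ← inner_sub_left]; congr 1; abel
    rw [h2] at h1
    have h3 := real_inner_le_norm (x - x') (J x - J x')
    by_contra hlt
    push Not at hlt
    nlinarith [norm_nonneg (x - x'), norm_nonneg (J x - J x')]
  have huniq : ∀ y p, CmpSubgrad φ y p → J (y + p) = y := by
    intro y p hp
    have h1 := cmp_subgrad_mono hp (hJ (y + p))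
    have h2 : y + p - J (y + p) - p = -(J (y + p) - y) := by abel
    rw [h2, inner_neg_left, real_inner_self_eq_norm_sq] at h1
    have : ‖J (y + p) - y‖ = 0 := by nlinarith [norm_nonneg (J (y + p) - y)]
    exact sub_eq_zero.1 (norm_eq_zero.1 this)
  set μ : Measure E := Measure.hausdorffMeasure (Module.finrank ℝ E) with hμ
  set N1 := {x | ¬ DifferentiableAt ℝ J x}
  set N2 := {x | DifferentiableAt ℝ J x ∧ (fderiv ℝ J x).det = 0}
  have hN1 : μ (J '' N1) = 0 := by
    have h0 : μ N1 = 0 := hlip.ae_differentiableAt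
    have := (hlip.lipschitzOnWith (s := N1)).hausdorffMeasure_image_le
      (d := (Module.finrank ℝ E : ℝ)) (by positivity)
    rw [← hμ, h0] at this
    simpa using this
  have hN2 : μ (J '' N2) = 0 :=
    addHaar_image_eq_zero_of_det_fderivWithin_eq_zero μ (f' := fun x => fderiv ℝ J x)
      (fun x hx => hx.1.hasFDerivAt.hasFDerivWithinAt) (fun x hx => hx.2)
  refine ⟨J '' N1 ∪ J '' N2, measure_union_null hN1 hN2, fun y hy => ?_⟩
  obtain ⟨p, hpC, hp⟩ := hφ y
  set x := y + p with hx
  have hJx : J x = y := huniq y p hp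
  have hdiff : DifferentiableAt ℝ J x := by
    by_contra hcon
    exact hy (Or.inl ⟨x, hcon, hJx⟩)
  have hdet : (fderiv ℝ J x).det ≠ 0 := by
    intro hcon
    exact hy (Or.inr ⟨x, ⟨hdiff, hcon⟩, hJx⟩)
  set D := fderiv ℝ J x with hD
  set De := D.toContinuousLinearEquivOfDetNeZero hdet with hDe
  have hDeD : ∀ h, De h = D h := fun h => rfl
  have hder : HasFDerivAt J D x := hdiff.hasFDerivAt
  have hpre : ∀ x2, J x2 = y → x2 = x := by
    intro x2 hx2
    have hs2 : CmpSubgrad φ y (x2 - y) := by have := hJ x2; rwa [hx2] at this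
    have hs1 : CmpSubgrad φ y (x - y) := by have := hJ x; rwa [hJx] at this
    have hseg : ∀ t : ℝ, 0 ≤ t → t ≤ 1 → J (x + t • (x2 - x)) = y := by
      intro t ht ht1
      have : CmpSubgrad φ y ((x + t • (x2 - x)) - y) := by
        intro z
        have a1 := hs1 z
        have a2 := hs2 z
        have e : x + t • (x2 - x) - y = (1 - t) • (x - y) + t • (x2 - y) := by module
        rw [e, inner_add_left, inner_smul_left, inner_smul_left]
        simp only [conj_trivial]
        nlinarith
      have h3 := huniq y _ this
      rwa [add_sub_cancel] at h3
    have hl : HasDerivWithinAt (fun t : ℝ => J (x + t • (x2 - x))) (D (x2 - x)) (Icc 0 1) 0 := by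
      have hline : HasDerivAt (fun t : ℝ => x + t • (x2 - x)) (x2 - x) 0 := by
        simpa using ((hasDerivAt_id (0 : ℝ)).smul_const (x2 - x)).const_add x
      have : HasFDerivAt J D (x + (0 : ℝ) • (x2 - x)) := by simpa using hder
      exact (this.comp_hasDerivAt (0 : ℝ) hline).hasDerivWithinAt
    have hl2 : HasDerivWithinAt (fun t : ℝ => J (x + t • (x2 - x))) 0 (Icc 0 1) 0 :=
      (hasDerivWithinAt_const (0 : ℝ) (Icc (0 : ℝ) 1) y).congr (fun t ht => hseg t ht.1 ht.2)
        (hseg 0 le_rfl zero_le_one)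
    have h0 : D (x2 - x) = 0 :=
      (uniqueDiffOn_Icc (zero_lt_one' ℝ) 0 (by simp)).eq_deriv _ hl hl2
    rw [← hDeD] at h0
    have := De.map_eq_zero_iff.1 h0
    exact sub_eq_zero.1 this
  set Q : E →L[ℝ] E := (De.symm : E →L[ℝ] E) - ContinuousLinearMap.id ℝ E with hQ
  refine ⟨p, Q, cmp_alex_pointwise (fun y => (hφ y).imp fun p hp => hp.2) ?_⟩
  intro η hη
  set M := ‖(De.symm : E →L[ℝ] E)‖ + 1 with hM
  have hM1 : 0 < M := by positivity
  have hMb : ∀ h, ‖De.symm h‖ ≤ M * ‖h‖ := fun h => by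
    have := (De.symm : E →L[ℝ] E).le_opNorm h
    have h2 : ‖(De.symm : E →L[ℝ] E)‖ * ‖h‖ ≤ M * ‖h‖ := by gcongr; simp [hM]
    exact this.trans h2
  set η' := min (1 / (2 * M)) (η / (2 * M ^ 2)) with hη'
  have hη'0 : 0 < η' := by positivity
  have hlit := hder.isLittleO.def hη'0
  obtain ⟨r, hr, hr'⟩ := Metric.eventually_nhds_iff.1 hlit
  have hcpt : IsCompact (Metric.closedBall (0 : E) (‖y‖ + 1 + |C|) \ Metric.ball x r) :=
    (isCompact_closedBall _ _).diff Metric.isOpen_ball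
  obtain ⟨c, hc0, hcc⟩ : ∃ c > 0, ∀ x' ∈ Metric.closedBall (0 : E) (‖y‖ + 1 + |C|) \ Metric.ball x r,
      c ≤ ‖J x' - y‖ := by
    rcases (Metric.closedBall (0 : E) (‖y‖ + 1 + |C|) \ Metric.ball x r).eq_empty_or_nonempty with he | hne
    · exact ⟨1, one_pos, by simp [he]⟩
    · obtain ⟨x0, hx0, hmin⟩ := hcpt.exists_isMinOn hne
        (f := fun x' => ‖J x' - y‖) (by have := hlip.continuous; fun_prop)
      refine ⟨‖J x0 - y‖, ?_, fun x' hx' => hmin hx'⟩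
      rw [gt_iff_lt, norm_pos_iff, sub_ne_zero]
      intro hcon
      have := hpre x0 hcon
      rw [this] at hx0
      exact hx0.2 (Metric.mem_ball_self hr)
  refine ⟨min c 1, by positivity, fun y' p' hy' hp' => ?_⟩
  obtain ⟨p'', hp''C, hp''⟩ := hφ y'
  have hJ' := huniq y' p' hp'
  have hp'C : ‖p'‖ ≤ |C| := by
    by_contra hcon
    push Not at hcon
    obtain ⟨p3, hp3C, hp3⟩ := hφ (y' + p')
    have h1 := cmp_subgrad_mono hp' hp3
    rw [add_sub_cancel_left, inner_sub_left, real_inner_self_eq_norm_sq] at h1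
    have h2 := real_inner_le_norm p3 p'
    have h3 := le_abs_self C
    nlinarith [norm_nonneg p3, norm_nonneg p', abs_nonneg C]
  have hx'r : ‖y' + p' - x‖ < r := by
    by_contra hcon
    push Not at hcon
    have := hcc (y' + p') ⟨by
      rw [mem_closedBall_zero_iff]
      have a1 := norm_add_le y' p'
      have a2 : ‖y'‖ ≤ ‖y‖ + ‖y' - y‖ := by
        have := norm_add_le y (y' - y); simpa using this
      have a3 := lt_of_lt_of_le hy' (min_le_right c 1)
      linarith, by rw [Metric.mem_ball, dist_eq_norm]; linarith⟩
    rw [hJ'] at this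
    have a3 := lt_of_lt_of_le hy' (min_le_left c 1)
    linarith
  have hexp := hr' (y := y' + p') (by rwa [dist_eq_norm])
  rw [hJ', hJx] at hexp
  set h := y' + p' - x with hh
  set k := y' - y with hk
  have e1 : De.symm (k - D h) = De.symm k - h := by
    rw [map_sub, ← hDeD, De.symm_apply_apply]
  have b1 : ‖De.symm k - h‖ ≤ M * (η' * ‖h‖) := by
    rw [← e1]; exact (hMb _).trans (by gcongr)
  have hη1 : M * η' ≤ 1 / 2 := by
    have : η' ≤ 1 / (2 * M) := min_le_left _ _
    calc M * η' ≤ M * (1 / (2 * M)) := by gcongr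
      _ = 1 / 2 := by field_simp
  have hη2 : 2 * M ^ 2 * η' ≤ η := by
    have : η' ≤ η / (2 * M ^ 2) := min_le_right _ _
    calc 2 * M ^ 2 * η' ≤ 2 * M ^ 2 * (η / (2 * M ^ 2)) := by gcongr
      _ = η := by field_simp
  have b2 : ‖h‖ ≤ 2 * (M * ‖k‖) := by
    have a1 : ‖h‖ ≤ ‖De.symm k‖ + ‖De.symm k - h‖ := by
      have := norm_sub_le (De.symm k) (De.symm k - h); simpa using this
    have a2 := hMb k
    have a3 : M * (η' * ‖h‖) ≤ 1 / 2 * ‖h‖ := by rw [← mul_assoc]; gcongr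
    linarith
  have e2 : p' - p - Q k = h - De.symm k := by
    simp only [hQ, _root_.sub_apply, ContinuousLinearEquiv.coe_coe,
      ContinuousLinearMap.id_apply, hh, hk, hx]
    abel
  rw [e2, norm_sub_rev]
  calc _ ≤ M * (η' * ‖h‖) := b1
    _ ≤ M * (η' * (2 * (M * ‖k‖))) := by gcongr
    _ = (2 * M ^ 2 * η') * ‖k‖ := by ring
    _ ≤ η * ‖k‖ := by gcongr

theorem cmp_jensen [FiniteDimensional ℝ E] [MeasurableSpace E] [BorelSpace E]
    {w : E → ℝ} {C δ : ℝ} (hC : 0 < C) (hδ : 0 < δ)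
    (hsc : ∀ x, ∃ q, ∀ y, w x + inner ℝ q (y - x) - C * ‖y - x‖ ^ 2 ≤ w y)
    (hmax : ∀ p : E, ‖p‖ < δ → ∃ x, ∀ y, w y ≤ w x + inner ℝ p (y - x))
    (S : Set E) (hS : Measure.hausdorffMeasure (Module.finrank ℝ E) S = 0) :
    ∃ p x, ‖p‖ < δ ∧ x ∉ S ∧ ∀ y, w y ≤ w x + inner ℝ p (y - x) := by
  by_contra hcon
  push Not at hcon
  have hlow : ∀ p x, (∀ y, w y ≤ w x + inner ℝ p (y - x)) →
      ∀ y, w x + inner ℝ p (y - x) - C * ‖y - x‖ ^ 2 ≤ w y := by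
    intro p x hx
    obtain ⟨q, hq⟩ := hsc x
    have : q = p := by
      by_contra hne
      have hpos : 0 < ‖q - p‖ := norm_pos_iff.2 (sub_ne_zero.2 hne)
      set t := 1 / (2 * C) with ht
      have ht0 : 0 < t := by positivity
      have h1 := hq (x + t • (q - p))
      have h2 := hx (x + t • (q - p))
      rw [add_sub_cancel_left, inner_smul_right, norm_smul, mul_pow, Real.norm_of_nonneg ht0.le] at h1
      rw [add_sub_cancel_left, inner_smul_right] at h2
      have h3 : inner ℝ q (q - p) - inner ℝ p (q - p) = ‖q - p‖ ^ 2 := by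
        rw [← inner_sub_left, real_inner_self_eq_norm_sq]
      have h4 : t * ‖q - p‖ ^ 2 ≤ C * (t ^ 2 * ‖q - p‖ ^ 2) := by
        have h7 : t * ‖q - p‖ ^ 2 = t * inner ℝ q (q - p) - t * inner ℝ p (q - p) := by
          rw [← h3]; ring
        linarith
      have h5 : C * (t ^ 2 * ‖q - p‖ ^ 2) = (1 / 2) * (t * ‖q - p‖ ^ 2) := by
        rw [ht]; field_simp
      have h6 : 0 < t * ‖q - p‖ ^ 2 := by positivity
      linarith
    rwa [← this]
  have hLip : ∀ p x p' x', (∀ y, w y ≤ w x + inner ℝ p (y - x)) →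
      (∀ y, w y ≤ w x' + inner ℝ p' (y - x')) → ‖p - p'‖ ≤ 4 * C * ‖x - x'‖ := by
    intro p x p' x' h h'
    rcases eq_or_ne p p' with heq | hne
    · subst heq; simp; positivity
    have hl := hlow p x h
    have hgen : ∀ y, inner ℝ (p - p') (y - x') ≤ C * ‖y - x‖ ^ 2 := by
      intro y
      have a1 := hl y
      have a2 := h' y
      have a3 := h x'
      have e : y - x = (y - x') + (x' - x) := by abel
      have e2 : inner ℝ p (y - x) = inner ℝ p (y - x') + inner ℝ p (x' - x) := by
        rw [← inner_add_right, ← e]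
      rw [inner_sub_left]
      linarith
    have hpos : 0 < ‖p - p'‖ := norm_pos_iff.2 (sub_ne_zero.2 hne)
    rcases eq_or_ne x x' with hxe | hxne
    · exfalso
      subst hxe
      have := hlow p' x h'
      set t := 1 / (2 * C) with ht
      have ht0 : 0 < t := by positivity
      have h1 := hgen (x + t • (p - p'))
      rw [add_sub_cancel_left, inner_smul_right, norm_smul, mul_pow, Real.norm_of_nonneg ht0.le,
        real_inner_self_eq_norm_sq] at h1
      have h5 : C * (t ^ 2 * ‖p - p'‖ ^ 2) = (1 / 2) * (t * ‖p - p'‖ ^ 2) := by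
        rw [ht]; field_simp
      have h6 : 0 < t * ‖p - p'‖ ^ 2 := by positivity
      linarith
    · have hd : 0 < ‖x - x'‖ := norm_pos_iff.2 (sub_ne_zero.2 hxne)
      set s := ‖x - x'‖ / ‖p - p'‖ with hs
      have hs0 : 0 < s := by positivity
      have h1 := hgen (x' + s • (p - p'))
      rw [add_sub_cancel_left, inner_smul_right, real_inner_self_eq_norm_sq] at h1
      have h2 : ‖x' + s • (p - p') - x‖ ≤ 2 * ‖x - x'‖ := by
        have e : x' + s • (p - p') - x = s • (p - p') - (x - x') := by abel
        rw [e]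
        refine (norm_sub_le _ _).trans ?_
        rw [norm_smul, Real.norm_of_nonneg hs0.le, hs, div_mul_cancel₀ _ hpos.ne']
        linarith
      have h3 : s * ‖p - p'‖ ^ 2 = ‖x - x'‖ * ‖p - p'‖ := by rw [hs]; field_simp
      have h4 : C * ‖x' + s • (p - p') - x‖ ^ 2 ≤ C * (2 * ‖x - x'‖) ^ 2 := by gcongr
      have h5 : ‖x - x'‖ * ‖p - p'‖ ≤ ‖x - x'‖ * (4 * C * ‖x - x'‖) := by
        rw [h3] at h1; nlinarith
      exact le_of_mul_le_mul_left h5 hd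
  set K := {x : E | ∃ p, ‖p‖ < δ ∧ ∀ y, w y ≤ w x + inner ℝ p (y - x)} with hK
  classical
  set P : E → E := fun x => if h : x ∈ K then h.choose else 0 with hP
  have hPs : ∀ x ∈ K, ∀ y, w y ≤ w x + inner ℝ (P x) (y - x) := by
    intro x hx
    simp only [hP, dif_pos hx]
    exact hx.choose_spec.2
  have hPlip : LipschitzOnWith (Real.toNNReal (4 * C)) P K := by
    refine LipschitzOnWith.of_dist_le_mul fun x hx x' hx' => ?_
    rw [dist_eq_norm, dist_eq_norm, Real.coe_toNNReal _ (by positivity)]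
    exact hLip _ _ _ _ (hPs x hx) (hPs x' hx')
  have hKS : K ⊆ S := by
    rintro x ⟨p, hp, hx⟩
    by_contra hxS
    obtain ⟨y, hy⟩ := hcon p x hp hxS
    exact absurd (hx y) (not_le.2 hy)
  have hK0 : Measure.hausdorffMeasure (Module.finrank ℝ E) K = 0 := measure_mono_null hKS hS
  have him : Measure.hausdorffMeasure (Module.finrank ℝ E) (P '' K) = 0 := by
    have := hPlip.hausdorffMeasure_image_le (d := (Module.finrank ℝ E : ℝ)) (by positivity)
    rw [hK0] at this
    simpa using this
  have hball : Metric.ball (0 : E) δ ⊆ P '' K := by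
    intro p hp
    rw [mem_ball_zero_iff] at hp
    obtain ⟨x, hx⟩ := hmax p hp
    have hxK : x ∈ K := ⟨p, hp, hx⟩
    refine ⟨x, hxK, ?_⟩
    have := hLip _ _ _ _ (hPs x hxK) hx
    simp only [sub_self, norm_zero, mul_zero] at this
    exact sub_eq_zero.1 (norm_le_zero_iff.1 this)
  have : (0 : ENNReal) < Measure.hausdorffMeasure (Module.finrank ℝ E) (Metric.ball (0 : E) δ) :=
    Metric.measure_ball_pos _ _ hδ
  have h2 := measure_mono_null hball him
  exact absurd h2 this.ne'

end convexTools

section sumsTools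
open MeasureTheory

theorem cmp_scale {E : Type*} [NormedAddCommGroup E] [InnerProductSpace ℝ E] (q : E)
    (M : E →L[ℝ] E)
    (h : ∀ η > 0, ∀ᶠ k in 𝓝 (0 : E), inner ℝ q k + (1 / 2) * inner ℝ (M k) k ≤ η * ‖k‖ ^ 2) :
    q = 0 ∧ ∀ k, inner ℝ (M k) k ≤ 0 := by
  have hray : ∀ η > 0, ∀ k : E, ∀ᶠ t in 𝓝 (0 : ℝ),
      t * inner ℝ q k + t ^ 2 * ((1 / 2) * inner ℝ (M k) k) ≤ t ^ 2 * (η * ‖k‖ ^ 2) := by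
    intro η hη k
    have ht : Tendsto (fun t : ℝ => t • k) (𝓝 0) (𝓝 (0 : E)) := by
      have : Continuous (fun t : ℝ => t • k) := by fun_prop
      simpa using this.tendsto 0
    filter_upwards [ht.eventually (h η hη)] with t ht
    rw [map_smul, inner_smul_right, inner_smul_right, inner_smul_left, norm_smul, mul_pow,
      Real.norm_eq_abs, sq_abs] at ht
    simp only [conj_trivial] at ht
    linarith
  have hq : q = 0 := by
    by_contra hne
    have hpos : 0 < ‖q‖ ^ 2 := by have := norm_pos_iff.2 hne; positivity
    have h1 := hray 1 one_pos q
    rw [real_inner_self_eq_norm_sq] at h1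
    set B := 1 * ‖q‖ ^ 2 - (1 / 2) * inner ℝ (M q) q with hB
    have h2 : ∀ᶠ t in 𝓝[>] (0 : ℝ), ‖q‖ ^ 2 ≤ t * B := by
      filter_upwards [nhdsWithin_le_nhds h1, self_mem_nhdsWithin] with t ht ht0
      have ht0' : 0 < t := ht0
      have : t * ‖q‖ ^ 2 ≤ t * (t * B) := by rw [hB]; nlinarith
      exact le_of_mul_le_mul_left this ht0'
    have lim : Tendsto (fun t : ℝ => t * B) (𝓝[>] 0) (𝓝 (0 * B)) :=
      ((by fun_prop : Continuous (fun t : ℝ => t * B)).tendsto 0).mono_left nhdsWithin_le_nhds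
    have := ge_of_tendsto lim h2
    linarith
  refine ⟨hq, fun k => ?_⟩
  subst hq
  have h3 : ∀ η > 0, (1 / 2) * inner ℝ (M k) k ≤ η * ‖k‖ ^ 2 := by
    intro η hη
    have h2 : ∀ᶠ t in 𝓝[>] (0 : ℝ), (1 / 2) * inner ℝ (M k) k ≤ η * ‖k‖ ^ 2 := by
      filter_upwards [nhdsWithin_le_nhds (hray η hη k), self_mem_nhdsWithin] with t ht ht0
      have ht0' : 0 < t ^ 2 := pow_pos ht0 2
      simp only [inner_zero_left, mul_zero, zero_add] at ht
      exact le_of_mul_le_mul_left ht ht0'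
    exact h2.exists.choose_spec
  by_contra hcon
  push Not at hcon
  rcases eq_or_ne k 0 with rfl | hk
  · simp at hcon
  have hkpos : 0 < ‖k‖ ^ 2 := by have := norm_pos_iff.2 hk; positivity
  have := h3 (inner ℝ (M k) k / (4 * ‖k‖ ^ 2)) (by positivity)
  have e : inner ℝ (M k) k / (4 * ‖k‖ ^ 2) * ‖k‖ ^ 2 = inner ℝ (M k) k / 4 := by field_simp
  linarith

/-- the convex function `x ↦ max_{y ∈ K} (W y + 2 c ⟨x,y⟩)`. -/
theorem cmp_env {E : Type*} [NormedAddCommGroup E] [InnerProductSpace ℝ E] {K : Set E}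
    (hK : IsCompact K) (hne : K.Nonempty) {W : E → ℝ} (hW : UpperSemicontinuousOn W K) (c : ℝ)
    (hc : 0 < c) {R : ℝ} (hR : ∀ y ∈ K, ‖y‖ ≤ R) :
    ∃ (a : E → ℝ) (Y : E → E), (∀ x, Y x ∈ K) ∧ (∀ x, a x = W (Y x) + 2 * c * inner ℝ x (Y x)) ∧
      (∀ x, ∀ y ∈ K, W y + 2 * c * inner ℝ x y ≤ a x) ∧
      (∀ x, ‖(2 * c) • Y x‖ ≤ 2 * c * R ∧ CmpSubgrad a x ((2 * c) • Y x)) ∧ Continuous a := by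
  have h : ∀ x : E, ∃ y ∈ K, IsMaxOn (fun y => W y + 2 * c * inner ℝ x y) K y := by
    intro x
    apply UpperSemicontinuousOn.exists_isMaxOn hne hK
    apply hW.add
    exact (Continuous.continuousOn (by fun_prop)).upperSemicontinuousOn
  choose Y hY hmax using h
  set a : E → ℝ := fun x => W (Y x) + 2 * c * inner ℝ x (Y x) with ha
  have hge : ∀ x, ∀ y ∈ K, W y + 2 * c * inner ℝ x y ≤ a x := fun x y hy => hmax x hy
  have hsub : ∀ x, ‖(2 * c) • Y x‖ ≤ 2 * c * R ∧ CmpSubgrad a x ((2 * c) • Y x) := by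
    intro x
    constructor
    · rw [norm_smul, Real.norm_of_nonneg (by positivity)]
      have := hR _ (hY x)
      gcongr
    · intro z
      have := hge z (Y x) (hY x)
      rw [inner_smul_left, inner_sub_right]
      simp only [conj_trivial]
      rw [real_inner_comm (Y x) z] at this
      simp only [ha] at this ⊢
      rw [real_inner_comm (Y x) x]
      linarith
  refine ⟨a, Y, hY, fun x => rfl, hge, hsub, ?_⟩
  have hR0 : 0 ≤ R := (norm_nonneg _).trans (hR _ (hY 0))
  have : LipschitzWith (Real.toNNReal (2 * c * R)) a := by
    refine LipschitzWith.of_le_add_mul _ fun x z => ?_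
    rw [Real.coe_toNNReal _ (by positivity), dist_eq_norm]
    have h1 := (hsub x).2 z
    have h2 := abs_real_inner_le_norm ((2 * c) • Y x) (z - x)
    have h3 := (abs_le.1 h2).1
    have h4 : ‖(2 * c) • Y x‖ * ‖z - x‖ ≤ 2 * c * R * ‖z - x‖ := by
      gcongr; exact (hsub x).1
    rw [norm_sub_rev x z]
    linarith
  exact this.continuous

set_option maxHeartbeats 1600000 in
theorem cmp_sums_E {E : Type*} [NormedAddCommGroup E] [InnerProductSpace ℝ E]
    [FiniteDimensional ℝ E] {K : Set E} (hK : IsCompact K) (hne : K.Nonempty) {U V : E → ℝ}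
    (hU : UpperSemicontinuousOn U K) (hV : LowerSemicontinuousOn V K) {c δ : ℝ} (hc : 0 < c)
    (hδ : 0 < δ) :
    ∃ y ∈ K, ∃ y' ∈ K, ∃ π π' : E, ∃ X Y : E →L[ℝ] E,
      (∀ η > 0, ∀ᶠ h in 𝓝 (0 : E), y + h ∈ K →
        U (y + h) ≤ U y + inner ℝ π h + (1 / 2) * inner ℝ (X h) h + η * ‖h‖ ^ 2) ∧
      (∀ η > 0, ∀ᶠ h in 𝓝 (0 : E), y' + h ∈ K →
        V y' + inner ℝ π' h + (1 / 2) * inner ℝ (Y h) h - η * ‖h‖ ^ 2 ≤ V (y' + h)) ∧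
      ‖π - π'‖ ≤ δ ∧ (∀ h, inner ℝ (X h) h ≤ inner ℝ (Y h) h) ∧
      ∀ x ∈ K, U x - V x + c / 4 * ‖y - y'‖ ^ 2 ≤ U y - V y' + δ := by
  borelize E
  obtain ⟨R, hR⟩ : ∃ R, ∀ y ∈ K, ‖y‖ ≤ R := hK.isBounded.exists_norm_le
  have hR0 : 0 ≤ R := (norm_nonneg _).trans (hR _ hne.some_mem)
  have hq : ContinuousOn (fun y : E => -(c * ‖y‖ ^ 2)) K := Continuous.continuousOn (by fun_prop)
  have hW1 : UpperSemicontinuousOn (fun y => U y + -(c * ‖y‖ ^ 2)) K :=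
    hU.add hq.upperSemicontinuousOn
  have hnV : UpperSemicontinuousOn (fun y => - V y) K := by
    intro x hx r hr
    have := hV x hx (-r) (by linarith)
    filter_upwards [this] with z hz
    linarith
  have hW2 : UpperSemicontinuousOn (fun y => - V y + -(c * ‖y‖ ^ 2)) K :=
    hnV.add hq.upperSemicontinuousOn
  obtain ⟨a, Ya, hYa, haeq, hage, hasub, hacont⟩ := cmp_env hK hne hW1 c hc hR
  obtain ⟨b, Yb, hYb, hbeq, hbge, hbsub, hbcont⟩ := cmp_env hK hne hW2 c hc hR
  obtain ⟨Sa, hSa, hSa'⟩ := cmp_alexandrov (fun y => ⟨_, hasub y⟩) hacont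
  obtain ⟨Sb, hSb, hSb'⟩ := cmp_alexandrov (fun y => ⟨_, hbsub y⟩) hbcont
  set w : E → ℝ := fun x => a x + b x - 2 * c * ‖x‖ ^ 2 with hw
  set δ' := min δ (min (δ / (4 * R + 1)) (min 1 (δ * c / 2))) with hδ'
  have hδ'0 : 0 < δ' := by positivity
  have hd1 : δ' ≤ δ := min_le_left _ _
  have hd2 : δ' ≤ δ / (4 * R + 1) := (min_le_right _ _).trans (min_le_left _ _)
  have hd3 : δ' ≤ 1 := (min_le_right _ _).trans ((min_le_right _ _).trans (min_le_left _ _))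
  have hd4 : δ' ≤ δ * c / 2 := (min_le_right _ _).trans ((min_le_right _ _).trans (min_le_right _ _))
  obtain ⟨p, x, hp, hxS, htouch⟩ := cmp_jensen (w := w) (C := 2 * c) (δ := δ') (by positivity) hδ'0
    (by
      intro x
      refine ⟨(2 * c) • Ya x + (2 * c) • Yb x - (4 * c) • x, fun y => ?_⟩
      have h1 := (hasub x).2 y
      have h2 := (hbsub x).2 y
      have h3 : ‖y‖ ^ 2 = ‖x‖ ^ 2 + 2 * inner ℝ x (y - x) + ‖y - x‖ ^ 2 := by
        rw [← norm_add_sq_real]; simp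
      rw [inner_sub_left, inner_add_left, inner_smul_left x]
      simp only [conj_trivial, hw]
      rw [h3]
      linarith)
    (by
      intro p hp
      have hcont : Continuous (fun x => w x - inner ℝ p x) := by
        simp only [hw]; fun_prop
      obtain ⟨x, hx⟩ := hcont.exists_forall_ge' 0 (by
        have : ∀ᶠ y in cocompact E, (4 * c * R + δ') / (2 * c) ≤ ‖y‖ :=
          (tendsto_norm_cocompact_atTop (E := E)).eventually_ge_atTop _
        filter_upwards [this] with y hy
        have h1 := (hasub y).2 0
        have h2 := (hbsub y).2 0
        have b1 := (abs_le.1 (abs_real_inner_le_norm ((2 * c) • Ya y) (0 - y))).1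
        have b2 := (abs_le.1 (abs_real_inner_le_norm ((2 * c) • Yb y) (0 - y))).1
        have b3 := (abs_le.1 (abs_real_inner_le_norm p y)).1
        have c1 : ‖(2 * c) • Ya y‖ * ‖0 - y‖ ≤ (2 * c * R) * ‖y‖ := by
          rw [zero_sub, norm_neg]; gcongr; exact (hasub y).1
        have c2 : ‖(2 * c) • Yb y‖ * ‖0 - y‖ ≤ (2 * c * R) * ‖y‖ := by
          rw [zero_sub, norm_neg]; gcongr; exact (hbsub y).1
        have c3 : ‖p‖ * ‖y‖ ≤ δ' * ‖y‖ := by gcongr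
        rw [div_le_iff₀ (by positivity)] at hy
        have h4 := mul_le_mul_of_nonneg_right hy (norm_nonneg y)
        simp only [hw, norm_zero, inner_zero_right]
        nlinarith)
      refine ⟨x, fun y => ?_⟩
      have := hx y
      rw [inner_sub_right]
      linarith) (Sa ∪ Sb) (measure_union_null hSa hSb)
  obtain ⟨α, A, hA⟩ := hSa' x (fun h => hxS (Or.inl h))
  obtain ⟨β, B, hB⟩ := hSb' x (fun h => hxS (Or.inr h))
  have hscale := cmp_scale (α + β - (4 * c) • x - p)
    (A + B - (4 * c) • ContinuousLinearMap.id ℝ E) (by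
      intro η hη
      filter_upwards [hA (η / 2) (by positivity), hB (η / 2) (by positivity)] with k hk1 hk2
      have h1 := (abs_le.1 hk1).1
      have h2 := (abs_le.1 hk2).1
      have h3 := htouch (x + k)
      simp only [hw, add_sub_cancel_left] at h3
      rw [norm_add_sq_real] at h3
      simp only [inner_sub_left, inner_add_left, inner_smul_left, conj_trivial, _root_.sub_apply,
        _root_.add_apply, _root_.smul_apply, ContinuousLinearMap.id_apply,
        real_inner_self_eq_norm_sq]
      nlinarith)
  refine ⟨Ya x, hYa x, Yb x, hYb x, α - (2 * c) • x, (2 * c) • x - β,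
    A - (2 * c) • ContinuousLinearMap.id ℝ E, (2 * c) • ContinuousLinearMap.id ℝ E - B,
    ?_, ?_, ?_, ?_, ?_⟩
  · intro η hη
    filter_upwards [hA η hη] with h hh hK
    have h1 := (abs_le.1 hh).2
    have h2 := hage (x + h) (Ya x + h) hK
    have h3 := haeq x
    simp only [inner_add_left, inner_add_right] at h2
    rw [norm_add_sq_real] at h2
    simp only [inner_sub_left, inner_smul_left, conj_trivial, _root_.sub_apply,
        _root_.smul_apply, ContinuousLinearMap.id_apply, real_inner_self_eq_norm_sq]
    rw [real_inner_self_eq_norm_sq, real_inner_comm (Ya x) h] at h2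
    nlinarith
  · intro η hη
    filter_upwards [hB η hη] with h hh hK
    have h1 := (abs_le.1 hh).2
    have h2 := hbge (x + h) (Yb x + h) hK
    have h3 := hbeq x
    simp only [inner_add_left, inner_add_right] at h2
    rw [norm_add_sq_real] at h2
    simp only [inner_sub_left, inner_smul_left, conj_trivial, _root_.sub_apply,
        _root_.smul_apply, ContinuousLinearMap.id_apply, real_inner_self_eq_norm_sq]
    rw [real_inner_self_eq_norm_sq, real_inner_comm (Yb x) h] at h2
    nlinarith
  · have : α - (2 * c) • x - ((2 * c) • x - β) = p := by
      have h0 := hscale.1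
      have : α - (2 * c) • x - ((2 * c) • x - β) = (α + β - (4 * c) • x - p) + p := by module
      rw [this, h0, zero_add]
    rw [this]; linarith
  · intro h
    have := hscale.2 h
    simp only [inner_sub_left, inner_add_left, inner_smul_left, conj_trivial, _root_.sub_apply,
        _root_.add_apply, _root_.smul_apply, ContinuousLinearMap.id_apply] at this ⊢
    linarith
  · intro z hz
    have h1 := htouch z
    have h2 := hage z z hz
    have h3 := hbge z z hz
    have h4 := haeq x
    have h5 := hbeq x
    simp only [hw] at h1
    rw [real_inner_self_eq_norm_sq] at h2 h3
    set y := Ya x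
    set y' := Yb x
    have e1 : ‖x - y‖ ^ 2 = ‖x‖ ^ 2 - 2 * inner ℝ x y + ‖y‖ ^ 2 := norm_sub_sq_real x y
    have e2 : ‖x - y'‖ ^ 2 = ‖x‖ ^ 2 - 2 * inner ℝ x y' + ‖y'‖ ^ 2 := norm_sub_sq_real x y'
    have h6 : U z - V z + inner ℝ p (x - z) + c * ‖x - y‖ ^ 2 + c * ‖x - y'‖ ^ 2 ≤ U y - V y' := by
      have : inner ℝ p (z - x) = - inner ℝ p (x - z) := by rw [← inner_neg_right]; congr 1; abel
      rw [e1, e2]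
      nlinarith
    have h7 : -(δ' * ‖x - y‖ + δ' * (2 * R)) ≤ inner ℝ p (x - z) := by
      have b := (abs_le.1 (abs_real_inner_le_norm p (x - z))).1
      have b2 : ‖x - z‖ ≤ ‖x - y‖ + 2 * R := by
        have t1 : x - z = (x - y) + (y - z) := by abel
        rw [t1]
        have t2 := norm_add_le (x - y) (y - z)
        have t3 := norm_sub_le y z
        have t4 := hR y (hYa x)
        have t5 := hR z hz
        linarith
      have b3 : ‖p‖ * ‖x - z‖ ≤ δ' * (‖x - y‖ + 2 * R) := by gcongr
      linarith
    have h8 : δ' * (2 * R) ≤ δ / 2 := by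
      rw [le_div_iff₀ (by positivity)] at hd2
      nlinarith
    have h9 : δ' * ‖x - y‖ ≤ c / 2 * ‖x - y‖ ^ 2 + δ / 2 := by
      have t1 : δ' * δ' ≤ δ * c / 2 := by nlinarith
      have t2 : 0 ≤ (c * ‖x - y‖ - δ') ^ 2 := sq_nonneg _
      have t3 : c * (δ' * ‖x - y‖) ≤ c * (c / 2 * ‖x - y‖ ^ 2 + δ / 2) := by nlinarith
      exact le_of_mul_le_mul_left t3 hc
    have h10 : ‖y - y'‖ ^ 2 ≤ 2 * ‖x - y‖ ^ 2 + 2 * ‖x - y'‖ ^ 2 := by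
      have t1 : y - y' = (x - y') - (x - y) := by abel
      have t2 := norm_sub_le (x - y') (x - y)
      rw [← t1] at t2
      have t3 : ‖y - y'‖ ^ 2 ≤ (‖x - y'‖ + ‖x - y‖) ^ 2 := by gcongr
      have t4 := sq_nonneg (‖x - y'‖ - ‖x - y‖)
      linarith
    have h11 : c / 4 * ‖y - y'‖ ^ 2 ≤ c / 4 * (2 * ‖x - y‖ ^ 2 + 2 * ‖x - y'‖ ^ 2) := by gcongr
    have h12 : 0 ≤ c * ‖x - y'‖ ^ 2 := by positivity
    linarith

end sumsTools

theorem cmp_sums_P {P : Type*} [NormedAddCommGroup P] [NormedSpace ℝ P]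
    [FiniteDimensional ℝ P] {K : Set P} (hK : IsCompact K) (hne : K.Nonempty) {U V : P → ℝ}
    (hU : UpperSemicontinuousOn U K) (hV : LowerSemicontinuousOn V K) {N δ : ℝ} (hN : 0 < N)
    (hδ : 0 < δ) :
    ∃ y ∈ K, ∃ y' ∈ K, ∃ π π' : P →L[ℝ] ℝ, ∃ X Y : P →L[ℝ] P →L[ℝ] ℝ,
      (∀ h k, X h k = X k h) ∧ (∀ h k, Y h k = Y k h) ∧
      (∀ η > 0, ∀ᶠ h in 𝓝 (0 : P), y + h ∈ K →
        U (y + h) ≤ U y + π h + (1 / 2) * X h h + η * ‖h‖ ^ 2) ∧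
      (∀ η > 0, ∀ᶠ h in 𝓝 (0 : P), y' + h ∈ K →
        V y' + π' h + (1 / 2) * Y h h - η * ‖h‖ ^ 2 ≤ V (y' + h)) ∧
      (∀ h, |π h - π' h| ≤ δ * ‖h‖) ∧ (∀ h, X h h ≤ Y h h) ∧
      ∀ x ∈ K, U x - V x + N * ‖y - y'‖ ^ 2 ≤ U y - V y' + δ := by
  set Φ : P ≃L[ℝ] EuclideanSpace ℝ (Fin (Module.finrank ℝ P)) := toEuclidean with hΦ
  obtain ⟨M, hM1, hMa, hMb⟩ : ∃ M : ℝ, 1 ≤ M ∧ (∀ h, ‖Φ h‖ ≤ M * ‖h‖) ∧ (∀ h, ‖h‖ ≤ M * ‖Φ h‖) := by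
    refine ⟨‖(Φ : P →L[ℝ] EuclideanSpace ℝ (Fin (Module.finrank ℝ P)))‖ +
      ‖(Φ.symm : EuclideanSpace ℝ (Fin (Module.finrank ℝ P)) →L[ℝ] P)‖ + 1, ?_, ?_, ?_⟩
    · have := norm_nonneg (Φ : P →L[ℝ] EuclideanSpace ℝ (Fin (Module.finrank ℝ P)))
      have := norm_nonneg (Φ.symm : EuclideanSpace ℝ (Fin (Module.finrank ℝ P)) →L[ℝ] P)
      linarith
    · intro h
      have h1 := (Φ : P →L[ℝ] EuclideanSpace ℝ (Fin (Module.finrank ℝ P))).le_opNorm h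
      have h2 := norm_nonneg (Φ.symm : EuclideanSpace ℝ (Fin (Module.finrank ℝ P)) →L[ℝ] P)
      have h3 := norm_nonneg h
      refine h1.trans ?_
      gcongr
      linarith
    · intro h
      have h1 := (Φ.symm : EuclideanSpace ℝ (Fin (Module.finrank ℝ P)) →L[ℝ] P).le_opNorm (Φ h)
      have h2 := norm_nonneg (Φ : P →L[ℝ] EuclideanSpace ℝ (Fin (Module.finrank ℝ P)))
      simp only [ContinuousLinearEquiv.coe_coe, ContinuousLinearEquiv.symm_apply_apply] at h1
      refine h1.trans ?_
      gcongr
      linarith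
  have hM0 : 0 < M := by linarith
  have hmaps : MapsTo Φ.symm (Φ '' K) K := by
    rintro _ ⟨x, hx, rfl⟩; simpa using hx
  have hU' : UpperSemicontinuousOn (fun x => U (Φ.symm x)) (Φ '' K) :=
    hU.comp Φ.symm.continuous.continuousOn hmaps
  have hV' : LowerSemicontinuousOn (fun x => V (Φ.symm x)) (Φ '' K) :=
    hV.comp Φ.symm.continuous.continuousOn hmaps
  obtain ⟨_, ⟨y, hy, rfl⟩, _, ⟨y', hy', rfl⟩, π, π', X, Y, h1, h2, h3, h4, h5⟩ :=
    cmp_sums_E (hK.image Φ.continuous) (hne.image Φ) hU' hV' (c := 4 * N * M ^ 2)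
      (δ := δ / M) (by positivity) (by positivity)
  have hbil : ∀ X : EuclideanSpace ℝ (Fin (Module.finrank ℝ P)) →L[ℝ]
      EuclideanSpace ℝ (Fin (Module.finrank ℝ P)), ∃ X' : P →L[ℝ] P →L[ℝ] ℝ,
      (∀ h k, X' h k = X' k h) ∧ ∀ h, X' h h = inner ℝ (X (Φ h)) (Φ h) := by
    intro X
    refine ⟨LinearMap.toContinuousBilinearMap (LinearMap.mk₂ ℝ
      (fun h k => (1 / 2 : ℝ) * (inner ℝ (X (Φ h)) (Φ k) + inner ℝ (X (Φ k)) (Φ h)))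
      ?_ ?_ ?_ ?_), ?_, ?_⟩
    · intro a b c; simp only [map_add, inner_add_left, inner_add_right]; ring
    · intro c a b
      simp only [map_smul, inner_smul_left, inner_smul_right, conj_trivial, smul_eq_mul]; ring
    · intro a b c; simp only [map_add, inner_add_left, inner_add_right]; ring
    · intro c a b
      simp only [map_smul, inner_smul_left, inner_smul_right, conj_trivial, smul_eq_mul]; ring
    · intro h k; simp only [LinearMap.toContinuousBilinearMap_apply, LinearMap.mk₂_apply]; ring
    · intro h; simp only [LinearMap.toContinuousBilinearMap_apply, LinearMap.mk₂_apply]; ring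
  obtain ⟨X', hX's, hX'⟩ := hbil X
  obtain ⟨Y', hY's, hY'⟩ := hbil Y
  have hlin : ∀ q : EuclideanSpace ℝ (Fin (Module.finrank ℝ P)), ∃ q' : P →L[ℝ] ℝ,
      ∀ h, q' h = inner ℝ q (Φ h) := fun q =>
    ⟨(innerSL ℝ q).comp (Φ : P →L[ℝ] EuclideanSpace ℝ (Fin (Module.finrank ℝ P))), fun h => rfl⟩
  obtain ⟨ϖ, hϖ⟩ := hlin π
  obtain ⟨ϖ', hϖ'⟩ := hlin π'
  have htend : Tendsto Φ (𝓝 0) (𝓝 0) := by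
    have := Φ.continuous.tendsto 0; simpa using this
  refine ⟨y, hy, y', hy', ϖ, ϖ', X', Y', hX's, hY's, ?_, ?_, ?_, ?_, ?_⟩
  · intro η hη
    filter_upwards [htend.eventually (h1 (η / M ^ 2) (by positivity))] with h hh hyK
    have a1 := hh ⟨y + h, hyK, by simp⟩
    rw [← map_add] at a1
    simp only [ContinuousLinearEquiv.symm_apply_apply] at a1
    rw [hϖ, hX']
    have a2 : η / M ^ 2 * ‖Φ h‖ ^ 2 ≤ η / M ^ 2 * (M * ‖h‖) ^ 2 := by gcongr; exact hMa h
    have a3 : η / M ^ 2 * (M * ‖h‖) ^ 2 = η * ‖h‖ ^ 2 := by field_simp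
    linarith
  · intro η hη
    filter_upwards [htend.eventually (h2 (η / M ^ 2) (by positivity))] with h hh hyK
    have a1 := hh ⟨y' + h, hyK, by simp⟩
    rw [← map_add] at a1
    simp only [ContinuousLinearEquiv.symm_apply_apply] at a1
    rw [hϖ', hY']
    have a2 : η / M ^ 2 * ‖Φ h‖ ^ 2 ≤ η / M ^ 2 * (M * ‖h‖) ^ 2 := by gcongr; exact hMa h
    have a3 : η / M ^ 2 * (M * ‖h‖) ^ 2 = η * ‖h‖ ^ 2 := by field_simp
    linarith
  · intro h
    rw [hϖ, hϖ', ← inner_sub_left]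
    refine (abs_real_inner_le_norm _ _).trans ?_
    have a2 : ‖π - π'‖ * ‖Φ h‖ ≤ δ / M * (M * ‖h‖) := by gcongr; exact hMa h
    have a3 : δ / M * (M * ‖h‖) = δ * ‖h‖ := by field_simp
    linarith
  · intro h; rw [hX', hY']; exact h4 _
  · intro x hx
    have a1 := h5 (Φ x) ⟨x, hx, rfl⟩
    simp only [ContinuousLinearEquiv.symm_apply_apply] at a1
    rw [← map_sub] at a1
    have a2 : ‖y - y'‖ ^ 2 ≤ (M * ‖Φ (y - y')‖) ^ 2 := by gcongr; exact hMb _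
    have a3 : N * ‖y - y'‖ ^ 2 ≤ N * (M * ‖Φ (y - y')‖) ^ 2 := by gcongr
    have a4 : δ / M ≤ δ := div_le_self hδ.le hM1
    linarith

section spectralTools

theorem cmp_cone_add {n : ℕ} {Γ : Set (Fin n → ℝ)} (hΓ : IsGammaCone n Γ) {x y : Fin n → ℝ}
    (hx : x ∈ closure Γ) (hy : y ∈ closure Γ) : x + y ∈ closure Γ := by
  obtain ⟨_, hconv, hcone, -⟩ := hΓ
  have hadd : ∀ a ∈ Γ, ∀ b ∈ Γ, a + b ∈ Γ := by
    intro a ha b hb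
    have h1 := hconv ha hb (show (0 : ℝ) ≤ 1 / 2 by norm_num) (show (0 : ℝ) ≤ 1 / 2 by norm_num)
      (by norm_num)
    have h2 := hcone _ h1 2 (by norm_num)
    convert h2 using 1
    module
  exact map_mem_closure₂ continuous_add hx hy hadd

theorem cmp_cone_pos {n : ℕ} (hn : 1 ≤ n) {Γ : Set (Fin n → ℝ)} (hΓ : IsGammaCone n Γ)
    {x : Fin n → ℝ} (hx : ∀ i, 0 ≤ x i) : x ∈ closure Γ := by
  obtain ⟨_, hconv, hcone, _, _, hsub, _⟩ := hΓ
  have hpos : ∀ y : Fin n → ℝ, (∀ i, 0 < y i) → y ∈ Γ := by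
    intro y hy
    apply hsub
    intro l hl hln
    unfold esym
    apply Finset.sum_pos
    · intro s _; exact Finset.prod_pos fun i _ => hy i
    · rw [Finset.powersetCard_nonempty]; simpa using hln
  have lim : Tendsto (fun t : ℝ => fun i => x i + t) (𝓝[>] 0) (𝓝 x) := by
    have : Continuous (fun t : ℝ => fun i => x i + t) := by fun_prop
    have h := (this.tendsto 0).mono_left (nhdsWithin_le_nhds (s := Ioi 0))
    simpa using h
  refine mem_closure_of_tendsto lim ?_
  filter_upwards [self_mem_nhdsWithin] with t ht
  exact hpos _ fun i => by have := hx i; have : 0 < t := ht; linarith [hx i]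

theorem cmp_birkhoff {n : ℕ} {Γ : Set (Fin n → ℝ)} {f : (Fin n → ℝ) → ℝ}
    (hΓ : IsGammaCone n Γ) (hf : IsHessianDensity n Γ f) {D : Matrix (Fin n) (Fin n) ℝ}
    (hD : D ∈ doublyStochastic ℝ (Fin n)) {x : Fin n → ℝ} (hx : x ∈ closure Γ) :
    D.mulVec x ∈ closure Γ ∧ f x ≤ f (D.mulVec x) := by
  obtain ⟨w, hw0, hw1, hw⟩ := exists_eq_sum_perm_of_mem_doublyStochastic hD
  have hperm : ∀ σ : Equiv.Perm (Fin n), x ∘ σ ∈ closure Γ := by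
    intro σ
    have hc : Continuous (fun y : Fin n → ℝ => y ∘ σ) := by fun_prop
    exact map_mem_closure (f := fun y : Fin n → ℝ => y ∘ σ) hc hx (fun y hy => hΓ.2.2.2.1 σ y hy)
  have hcl : Convex ℝ (closure Γ) := hΓ.2.1.closure
  have heq : D.mulVec x = ∑ σ, w σ • (x ∘ σ) := by
    rw [← hw, Matrix.sum_mulVec]
    refine Finset.sum_congr rfl fun σ _ => ?_
    rw [Matrix.smul_mulVec, Matrix.permMatrix_mulVec]
  rw [heq]
  constructor
  · exact hcl.sum_mem (fun σ _ => hw0 σ) hw1 (fun σ _ => hperm σ)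
  · have := hf.2.2.1.le_map_sum (t := Finset.univ) (fun σ _ => hw0 σ) hw1 (fun σ _ => hperm σ)
    refine le_trans ?_ this
    have h2 : ∀ σ : Equiv.Perm (Fin n), f (x ∘ σ) = f x := fun σ => hf.2.1 σ x hx
    simp only [h2, smul_eq_mul]
    rw [← Finset.sum_mul, hw1, one_mul]

open scoped ComplexOrder in
/-- concavity and monotonicity of the spectral operator, in the form used below -/
theorem cmp_spectral {n : ℕ} (hn : 1 ≤ n) {Γ : Set (Fin n → ℝ)} {f : (Fin n → ℝ) → ℝ}
    (hΓ : IsGammaCone n Γ) (hf : IsHessianDensity n Γ f) {A B : Matrix (Fin n) (Fin n) ℂ}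
    (hA : A.IsHermitian) (hB : B.IsHermitian) (hAΓ : hA.eigenvalues ∈ closure Γ) {s R : ℝ}
    (hs0 : 0 ≤ s) (hs1 : s ≤ 1) (hR : 0 ≤ R)
    (hAB : ∀ x : Fin n → ℂ, (1 - s) * (star x ⬝ᵥ A.mulVec x).re + s * R * ∑ i, ‖x i‖ ^ 2 ≤
      (star x ⬝ᵥ B.mulVec x).re) :
    hB.eigenvalues ∈ closure Γ ∧
      (1 - s) * f hA.eigenvalues + s * f (fun _ => R) ≤ f hB.eigenvalues := by
  set a := hA.eigenvectorBasis with ha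
  set b := hB.eigenvectorBasis with hb
  set D : Matrix (Fin n) (Fin n) ℝ := fun i j => ‖inner ℂ (a j) (b i)‖ ^ 2 with hD
  have hDs : D ∈ doublyStochastic ℝ (Fin n) := by
    rw [mem_doublyStochastic_iff_sum]
    refine ⟨fun i j => by positivity, fun i => ?_, fun j => ?_⟩
    · simp only [hD]
      rw [a.sum_sq_norm_inner_right, b.norm_eq_one, one_pow]
    · simp only [hD]
      rw [b.sum_sq_norm_inner_left, a.norm_eq_one, one_pow]
  obtain ⟨hμ, hfμ⟩ := cmp_birkhoff hΓ hf hDs hAΓ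
  set μ := D.mulVec hA.eigenvalues with hμdef
  have hAq : ∀ i, (star (b i).ofLp ⬝ᵥ A.mulVec (b i).ofLp).re = μ i := by
    intro i
    have e1 : ((b i).ofLp : Fin n → ℂ) = ∑ j, (inner ℂ (a j) (b i)) • (a j).ofLp := by
      have := a.sum_repr' (b i)
      have h2 := congrArg WithLp.ofLp this
      rw [WithLp.ofLp_sum] at h2
      exact h2.symm
    have e2 : A.mulVec (b i).ofLp = ∑ j, (inner ℂ (a j) (b i)) • ((hA.eigenvalues j : ℂ) • (a j).ofLp) := by
      conv_lhs => rw [e1]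
      rw [Matrix.mulVec_sum]
      refine Finset.sum_congr rfl fun j _ => ?_
      rw [Matrix.mulVec_smul, ha, hA.mulVec_eigenvectorBasis]
      rfl
    rw [e2, dotProduct_sum, Complex.re_sum, hμdef]
    simp only [Matrix.mulVec, dotProduct_smul]
    rw [dotProduct]
    refine Finset.sum_congr rfl fun j _ => ?_
    have e3 : star (b i).ofLp ⬝ᵥ (a j).ofLp = inner ℂ (b i) (a j) := by
      rw [EuclideanSpace.inner_eq_star_dotProduct, dotProduct_comm]
    rw [e3, hD, ← inner_conj_symm (b i) (a j)]
    simp only [smul_eq_mul]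
    have e4 : inner ℂ (a j) (b i) * ((hA.eigenvalues j : ℂ) * (starRingEnd ℂ) (inner ℂ (a j) (b i)))
      = ((hA.eigenvalues j * ‖inner ℂ (a j) (b i)‖ ^ 2 : ℝ) : ℂ) := by
      have := Complex.mul_conj' (inner ℂ (a j) (b i))
      push_cast
      rw [← this]; ring
    rw [e4, Complex.ofReal_re, mul_comm]
  have hBq : ∀ i, (star (b i).ofLp ⬝ᵥ B.mulVec (b i).ofLp).re = hB.eigenvalues i := by
    intro i
    rw [hb, hB.mulVec_eigenvectorBasis, dotProduct_smul, ← hb]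
    have e3 : star (b i).ofLp ⬝ᵥ (b i).ofLp = inner ℂ (b i) (b i) := by
      rw [EuclideanSpace.inner_eq_star_dotProduct, dotProduct_comm]
    rw [e3, inner_self_eq_norm_sq_to_K, b.norm_eq_one]
    simp
  have hone : ∀ i, ∑ k, ‖(b i).ofLp k‖ ^ 2 = 1 := by
    intro i
    have := b.norm_eq_one i
    rw [← EuclideanSpace.norm_sq_eq, this, one_pow]
  have hRc : (fun _ => R : Fin n → ℝ) ∈ closure Γ := cmp_cone_pos hn hΓ fun _ => hR
  set ν : Fin n → ℝ := (1 - s) • μ + s • (fun _ => R) with hν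
  have hνc : ν ∈ closure Γ := hΓ.2.1.closure hμ hRc (by linarith) hs0 (by ring)
  have hfν := hf.2.2.1.2 hμ hRc (show 0 ≤ 1 - s by linarith) hs0 (by ring)
  have hle : ∀ i, ν i ≤ hB.eigenvalues i := by
    intro i
    have := hAB (b i).ofLp
    rw [hAq, hBq, hone] at this
    simp only [hν, Pi.add_apply, Pi.smul_apply, smul_eq_mul]
    linarith
  have hBΓ : hB.eigenvalues ∈ closure Γ := by
    have := cmp_cone_add hΓ hνc (cmp_cone_pos hn hΓ (x := hB.eigenvalues - ν)
      fun i => by simpa using hle i)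
    simpa using this
  refine ⟨hBΓ, ?_⟩
  have hmono : f ν ≤ f hB.eigenvalues := by
    rcases eq_or_ne ν hB.eigenvalues with h | h
    · rw [h]
    · exact (hf.2.2.2.1 ν hνc _ hBΓ hle h).le
  simp only [smul_eq_mul] at hfν
  have : (1 - s) * f hA.eigenvalues ≤ (1 - s) * f μ :=
    mul_le_mul_of_nonneg_left hfμ (by linarith)
  linarith

end spectralTools

section hessTools

/-- The Hermitian matrix attached to a real bilinear form on `ℂⁿ`. -/
noncomputable def cmpHerm {n : ℕ} (B : (Fin n → ℂ) →L[ℝ] (Fin n → ℂ) →L[ℝ] ℝ) :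
    Matrix (Fin n) (Fin n) ℂ := fun j k =>
  (((B (Pi.single j 1) (Pi.single k 1) +
        B (Pi.single j Complex.I) (Pi.single k Complex.I)) / 4 : ℝ) : ℂ) +
    Complex.I *
      (((B (Pi.single j 1) (Pi.single k Complex.I) -
          B (Pi.single j Complex.I) (Pi.single k 1)) / 4 : ℝ) : ℂ)

theorem cmp_quad_contDiff {W : Type*} [NormedAddCommGroup W] [NormedSpace ℝ W] (c : ℝ)
    (ℓ : W →L[ℝ] ℝ) (B : W →L[ℝ] W →L[ℝ] ℝ) (z₀ : W) :
    ContDiff ℝ 2 (fun z => c + ℓ (z - z₀) + (1 / 2) * B (z - z₀) (z - z₀)) := by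
  fun_prop

theorem cmp_quad_iter {W : Type*} [NormedAddCommGroup W] [NormedSpace ℝ W] (c : ℝ)
    (ℓ : W →L[ℝ] ℝ) (B : W →L[ℝ] W →L[ℝ] ℝ) (hB : ∀ h k, B h k = B k h) (z₀ a b : W) :
    iteratedFDeriv ℝ 2 (fun z => c + ℓ (z - z₀) + (1 / 2) * B (z - z₀) (z - z₀)) z₀ ![a, b] =
      B a b := by
  have h1 : ∀ z, HasFDerivAt (fun z => c + ℓ (z - z₀) + (1 / 2) * B (z - z₀) (z - z₀))
      (ℓ + B (z - z₀)) z := by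
    intro z
    have hs : HasFDerivAt (fun z : W => z - z₀) (ContinuousLinearMap.id ℝ W) z :=
      (hasFDerivAt_id z).sub_const z₀
    have hl := ℓ.hasFDerivAt.comp z hs
    have hb := (B.hasFDerivAt.comp z hs).clm_apply hs
    have := (hl.const_add c).add (hb.const_mul (1 / 2 : ℝ))
    refine this.congr_fderiv ?_
    ext w
    simp [hB w z, hB w z₀]
    ring
  have h2 : fderiv ℝ (fun z => c + ℓ (z - z₀) + (1 / 2) * B (z - z₀) (z - z₀)) =
      fun z => ℓ + B (z - z₀) := funext fun z => (h1 z).fderiv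
  rw [iteratedFDeriv_two_apply, h2]
  have h3 : HasFDerivAt (fun z => ℓ + B (z - z₀)) B z₀ := by
    have hs : HasFDerivAt (fun z : W => z - z₀) (ContinuousLinearMap.id ℝ W) z₀ :=
      (hasFDerivAt_id z₀).sub_const z₀
    exact (B.hasFDerivAt.comp z₀ hs).const_add ℓ
  rw [h3.fderiv]
  simp

theorem cmp_quad_hess {n : ℕ} (c : ℝ)
    (ℓ : (Fin n → ℂ) →L[ℝ] ℝ) (B : (Fin n → ℂ) →L[ℝ] (Fin n → ℂ) →L[ℝ] ℝ)
    (hB : ∀ h k, B h k = B k h) (z₀ : Fin n → ℂ) :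
    complexHessian (fun z => c + ℓ (z - z₀) + (1 / 2) * B (z - z₀) (z - z₀)) z₀ =
      cmpHerm B := by
  funext j k
  simp only [complexHessian, cmp_quad_iter c ℓ B hB z₀, cmpHerm]

theorem cmpHerm_isHermitian {n : ℕ} (B : (Fin n → ℂ) →L[ℝ] (Fin n → ℂ) →L[ℝ] ℝ)
    (hB : ∀ h k, B h k = B k h) : (cmpHerm B).IsHermitian := by
  ext j k
  simp only [Matrix.conjTranspose_apply, cmpHerm, hB (Pi.single k _) (Pi.single j _)]
  apply Complex.ext <;> simp <;> ring

theorem cmpHerm_quad {n : ℕ} (B : (Fin n → ℂ) →L[ℝ] (Fin n → ℂ) →L[ℝ] ℝ) (x : Fin n → ℂ) :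
    (star x ⬝ᵥ (cmpHerm B).mulVec x).re =
      (1 / 4) * (B (star x) (star x) + B (Complex.I • star x) (Complex.I • star x)) := by
  have e1 : star x = ∑ j, ((x j).re • (Pi.single j 1 : Fin n → ℂ) -
      (x j).im • (Pi.single j Complex.I : Fin n → ℂ)) := by
    funext k
    simp only [Finset.sum_apply, Pi.sub_apply, Pi.smul_apply, Pi.single_apply]
    rw [Finset.sum_eq_single k]
    · apply Complex.ext <;> simp
    · intro b _ hb; simp [hb.symm]
    · simp
  have e2 : Complex.I • star x = ∑ j, ((x j).re • (Pi.single j Complex.I : Fin n → ℂ) +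
      (x j).im • (Pi.single j 1 : Fin n → ℂ)) := by
    funext k
    simp only [Finset.sum_apply, Pi.add_apply, Pi.smul_apply, Pi.single_apply]
    rw [Finset.sum_eq_single k]
    · apply Complex.ext <;> simp
    · intro b _ hb; simp [hb.symm]
    · simp
  have l : (star x ⬝ᵥ (cmpHerm B).mulVec x).re =
      ∑ j, ∑ k, (star (x j) * (cmpHerm B j k * x k)).re := by
    simp only [dotProduct, Matrix.mulVec, Finset.mul_sum, Complex.re_sum, Pi.star_apply]
  rw [l, e2, e1]
  simp only [map_sum, _root_.sum_apply, map_add, map_sub, map_smul,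
    _root_.add_apply, _root_.sub_apply, _root_.smul_apply,
    smul_eq_mul]
  rw [Finset.sum_comm, ← Finset.sum_add_distrib, Finset.mul_sum]
  refine Finset.sum_congr rfl fun j _ => ?_
  simp only [← Finset.sum_add_distrib, ← Finset.sum_sub_distrib, Finset.mul_sum]
  refine Finset.sum_congr rfl fun k _ => ?_
  simp [cmpHerm]
  ring

/-- The bilinear form with `(1/2) B(z,z) = ∑ |z_j|²`. -/
noncomputable def cmpEuc (n : ℕ) : (Fin n → ℂ) →L[ℝ] (Fin n → ℂ) →L[ℝ] ℝ :=
  ∑ j : Fin n, (2 : ℝ) •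
    ((Complex.reCLM.comp (ContinuousLinearMap.proj (R := ℝ) (φ := fun _ : Fin n => ℂ) j)).smulRight
      (Complex.reCLM.comp (ContinuousLinearMap.proj (R := ℝ) (φ := fun _ : Fin n => ℂ) j)) +
    (Complex.imCLM.comp (ContinuousLinearMap.proj (R := ℝ) (φ := fun _ : Fin n => ℂ) j)).smulRight
      (Complex.imCLM.comp (ContinuousLinearMap.proj (R := ℝ) (φ := fun _ : Fin n => ℂ) j)))

theorem cmpEuc_apply {n : ℕ} (a b : Fin n → ℂ) :
    cmpEuc n a b = ∑ j, 2 * ((a j).re * (b j).re + (a j).im * (b j).im) := by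
  simp [cmpEuc, mul_add]

theorem cmpEuc_symm {n : ℕ} (a b : Fin n → ℂ) : cmpEuc n a b = cmpEuc n b a := by
  simp only [cmpEuc_apply]
  refine Finset.sum_congr rfl fun j _ => by ring

theorem cmpEuc_self {n : ℕ} (a : Fin n → ℂ) : cmpEuc n a a = 2 * ∑ j, ‖a j‖ ^ 2 := by
  simp only [cmpEuc_apply, Finset.mul_sum]
  refine Finset.sum_congr rfl fun j _ => ?_
  rw [Complex.sq_norm, Complex.normSq_apply]

theorem cmpEuc_norm {n : ℕ} (a : Fin n → ℂ) : ‖a‖ ^ 2 ≤ (1 / 2) * cmpEuc n a a := by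
  rw [cmpEuc_self]
  have h : ‖a‖ ≤ Real.sqrt (∑ j, ‖a j‖ ^ 2) := by
    rw [pi_norm_le_iff_of_nonneg (Real.sqrt_nonneg _)]
    intro i
    apply Real.le_sqrt_of_sq_le
    exact Finset.single_le_sum (f := fun j => ‖a j‖ ^ 2) (fun j _ => by positivity)
      (Finset.mem_univ i)
  have := pow_le_pow_left₀ (norm_nonneg a) h 2
  rw [Real.sq_sqrt (Finset.sum_nonneg fun j _ => by positivity)] at this
  linarith

theorem cmpEuc_herm {n : ℕ} (x : Fin n → ℂ) :
    (1 / 4) * (cmpEuc n (star x) (star x) + cmpEuc n (Complex.I • star x) (Complex.I • star x)) =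
      ∑ j, ‖x j‖ ^ 2 := by
  rw [cmpEuc_self, cmpEuc_self]
  simp
  ring

end hessTools

section coreTools

/-- Auxiliary strict subsolution. -/
noncomputable def cmpRho (n : ℕ) (T R C₀ : ℝ) (p : ℝ × (Fin n → ℂ)) : ℝ :=
  (R + 1) * ((1 / 2) * cmpEuc n p.2 p.2) - C₀ - (T - p.1)⁻¹

theorem cmp_prod_norm {n : ℕ} (h : ℝ × (Fin n → ℂ)) :
    ‖h‖ ^ 2 ≤ h.1 ^ 2 + (1 / 2) * cmpEuc n h.2 h.2 := by
  have h2 := cmpEuc_norm h.2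
  have h1 : ‖h.1‖ ^ 2 = h.1 ^ 2 := by simp
  have h3 : 0 ≤ ‖h.2‖ ^ 2 := by positivity
  rw [Prod.norm_def]
  rcases le_total ‖h.1‖ ‖h.2‖ with hh | hh
  · rw [max_eq_right hh]; nlinarith [sq_nonneg h.1]
  · rw [max_eq_left hh]; linarith

theorem cmp_test_sub {n : ℕ} {Γ : Set (Fin n → ℝ)} {f : (Fin n → ℝ) → ℝ}
    {Ω : Set (Fin n → ℂ)} {T : ℝ}
    {G : ℝ → (Fin n → ℂ) → ℝ → ℝ} {g : (Fin n → ℂ) → ℝ} {u : ℝ × (Fin n → ℂ) → ℝ}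
    (hsub : ParSubsolOn f Γ G g (Set.Ioo 0 T ×ˢ Ω) u)
    {y : ℝ × (Fin n → ℂ)} (hy : y ∈ Set.Ioo 0 T ×ˢ Ω) {s R C₀ η : ℝ}
    (hs1 : s < 1) (hη : 0 < η)
    {π : ℝ × (Fin n → ℂ) →L[ℝ] ℝ}
    {X : ℝ × (Fin n → ℂ) →L[ℝ] ℝ × (Fin n → ℂ) →L[ℝ] ℝ} (hX : ∀ h k, X h k = X k h)
    (hXu : ∀ᶠ h in 𝓝 (0 : ℝ × (Fin n → ℂ)),
      (1 - s) * u (y + h) + s * cmpRho n T R C₀ (y + h) ≤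
        (1 - s) * u y + s * cmpRho n T R C₀ y + π h + (1 / 2) * X h h + η * ‖h‖ ^ 2)
    {B : (Fin n → ℂ) →L[ℝ] (Fin n → ℂ) →L[ℝ] ℝ}
    (hB : ∀ a b, B a b = (1 - s)⁻¹ * (X (0, a) (0, b) + (η - s * (R + 1)) * cmpEuc n a b)) :
    ((Real.exp ((1 - s)⁻¹ * (π (1, 0) + s * ((T - y.1) ^ 2)⁻¹) + G y.1 y.2 (u y)) * g y.2 : ℝ)
      : EReal) ≤ Fop f Γ (cmpHerm B) := by
  have hs' : 0 < 1 - s := by linarith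
  have hyT : y.1 < T := hy.1.2
  set q : ℝ × (Fin n → ℂ) → ℝ := fun p => (1 - s)⁻¹ * ((1 - s) * u y + s * cmpRho n T R C₀ y
    + π (p - y) + (1 / 2) * X (p - y) (p - y)
    + η * ((p.1 - y.1) ^ 2 + (1 / 2) * cmpEuc n (p.2 - y.2) (p.2 - y.2))
    - s * cmpRho n T R C₀ p) with hq
  have hqy : q y = u y := by
    simp only [hq, sub_self, map_zero]
    field_simp
    ring
  have htest : IsUpperTestAt u q y := by
    refine ⟨hqy, ?_, ?_⟩
    · have ht : Tendsto (fun p : ℝ × (Fin n → ℂ) => p - y) (𝓝 y) (𝓝 0) := by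
        have : Continuous fun p : ℝ × (Fin n → ℂ) => p - y := by fun_prop
        simpa using this.tendsto y
      filter_upwards [ht.eventually hXu] with p hp
      rw [add_sub_cancel] at hp
      have hN := cmp_prod_norm (p - y)
      have hN' := mul_le_mul_of_nonneg_left hN hη.le
      simp only [Prod.fst_sub, Prod.snd_sub] at hN'
      simp only [hq]
      rw [inv_mul_eq_div, le_div_iff₀ hs']
      linarith
    · have hT : ∀ᶠ p : ℝ × (Fin n → ℂ) in 𝓝 y, p.1 < T :=
        continuous_fst.continuousAt.eventually (gt_mem_nhds hyT)
      filter_upwards [hT] with p hp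
      have hne : T - p.1 ≠ 0 := by linarith
      constructor
      · simp only [hq, cmpRho]
        have : DifferentiableAt ℝ (fun t : ℝ => (T - t)⁻¹) p.1 := by
          fun_prop (disch := exact hne)
        fun_prop
      · simp only [hq, cmpRho]
        fun_prop
  have hmain := hsub.2 y hy q htest
  have hd : deriv (fun t => q (t, y.2)) y.1 =
      (1 - s)⁻¹ * (π (1, 0) + s * ((T - y.1) ^ 2)⁻¹) := by
    have heq : (fun t => q (t, y.2)) = fun t => (1 - s)⁻¹ * (((1 - s) * u y
        + s * cmpRho n T R C₀ y - s * ((R + 1) * ((1 / 2) * cmpEuc n y.2 y.2) - C₀))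
        + (t - y.1) * π (1, 0) + ((1 / 2) * X (1, 0) (1, 0) + η) * (t - y.1) ^ 2
        + s * (T - t)⁻¹) := by
      funext t
      have e : ((t, y.2) : ℝ × (Fin n → ℂ)) - y = (t - y.1) • ((1, 0) : ℝ × (Fin n → ℂ)) := by
        ext <;> simp
      simp only [hq, e, map_smul, _root_.smul_apply, smul_eq_mul, sub_self, map_zero]
      simp only [cmpRho]
      ring
    rw [heq]
    have h1 : HasDerivAt (fun t : ℝ => t - y.1) 1 y.1 := (hasDerivAt_id _).sub_const _
    have h2 : HasDerivAt (fun t : ℝ => (T - t)⁻¹) (((T - y.1) ^ 2)⁻¹) y.1 := by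
      have := ((hasDerivAt_id y.1).const_sub T).fun_inv (by simp; linarith)
      simpa using this
    have h3 := ((((h1.mul_const (π (1, 0))).const_add ((1 - s) * u y
        + s * cmpRho n T R C₀ y - s * ((R + 1) * ((1 / 2) * cmpEuc n y.2 y.2) - C₀))).add
        ((h1.pow 2).const_mul ((1 / 2) * X (1, 0) (1, 0) + η))).add (h2.const_mul s)).const_mul
        ((1 - s)⁻¹)
    refine HasDerivAt.deriv (h3.congr_deriv ?_)
    simp
  have hBs : ∀ a b, B a b = B b a := by
    intro a b
    rw [hB, hB, hX, cmpEuc_symm]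
  have hh : complexHessian (fun z => q (y.1, z)) y.2 = cmpHerm B := by
    set ℓ : (Fin n → ℂ) →L[ℝ] ℝ := (1 - s)⁻¹ • (π.comp (ContinuousLinearMap.inr ℝ ℝ (Fin n → ℂ))
      - (s * (R + 1)) • cmpEuc n y.2) with hℓ
    have heq : (fun z => q (y.1, z)) = fun z => u y + ℓ (z - y.2)
        + (1 / 2) * B (z - y.2) (z - y.2) := by
      funext z
      have e : ((y.1, z) : ℝ × (Fin n → ℂ)) - y = (0, z - y.2) := by ext <;> simp
      have e2 : cmpEuc n z z = cmpEuc n y.2 y.2 + 2 * cmpEuc n y.2 (z - y.2)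
          + cmpEuc n (z - y.2) (z - y.2) := by
        simp only [map_sub, _root_.sub_apply, cmpEuc_symm z y.2]
        ring
      have e3 : ℓ (z - y.2) = (1 - s)⁻¹ * (π (0, z - y.2)
          - (s * (R + 1)) * cmpEuc n y.2 (z - y.2)) := by
        simp [hℓ]
      rw [hB, e3]
      simp only [hq, e, cmpRho, e2]
      field_simp
      ring
    rw [heq]
    exact cmp_quad_hess _ _ _ hBs _
  rw [hd, hqy, hh] at hmain
  exact hmain

theorem cmp_test_sup {n : ℕ} {Γ : Set (Fin n → ℝ)} {f : (Fin n → ℝ) → ℝ}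
    {Ω : Set (Fin n → ℂ)} {T : ℝ}
    {G : ℝ → (Fin n → ℂ) → ℝ → ℝ} {g : (Fin n → ℂ) → ℝ} {v : ℝ × (Fin n → ℂ) → ℝ}
    (hsup : ParSupersolOn f Γ G g (Set.Ioo 0 T ×ˢ Ω) v)
    {y : ℝ × (Fin n → ℂ)} (hy : y ∈ Set.Ioo 0 T ×ˢ Ω) {η : ℝ} (hη : 0 < η)
    {π : ℝ × (Fin n → ℂ) →L[ℝ] ℝ}
    {X : ℝ × (Fin n → ℂ) →L[ℝ] ℝ × (Fin n → ℂ) →L[ℝ] ℝ} (hX : ∀ h k, X h k = X k h)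
    (hXu : ∀ᶠ h in 𝓝 (0 : ℝ × (Fin n → ℂ)),
      v y + π h + (1 / 2) * X h h - η * ‖h‖ ^ 2 ≤ v (y + h))
    {B : (Fin n → ℂ) →L[ℝ] (Fin n → ℂ) →L[ℝ] ℝ}
    (hB : ∀ a b, B a b = X (0, a) (0, b) - η * cmpEuc n a b) :
    Fop f Γ (cmpHerm B) ≤
      ((Real.exp (π (1, 0) + G y.1 y.2 (v y)) * g y.2 : ℝ) : EReal) := by
  set q : ℝ × (Fin n → ℂ) → ℝ := fun p => v y
    + π (p - y) + (1 / 2) * X (p - y) (p - y)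
    - η * ((p.1 - y.1) ^ 2 + (1 / 2) * cmpEuc n (p.2 - y.2) (p.2 - y.2)) with hq
  have hqy : q y = v y := by
    simp only [hq, sub_self, map_zero]
    ring
  have htest : IsLowerTestAt v q y := by
    refine ⟨hqy, ?_, ?_⟩
    · have ht : Tendsto (fun p : ℝ × (Fin n → ℂ) => p - y) (𝓝 y) (𝓝 0) := by
        have : Continuous fun p : ℝ × (Fin n → ℂ) => p - y := by fun_prop
        simpa using this.tendsto y
      filter_upwards [ht.eventually hXu] with p hp
      rw [add_sub_cancel] at hp
      have hN := cmp_prod_norm (p - y)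
      have hN' := mul_le_mul_of_nonneg_left hN hη.le
      simp only [Prod.fst_sub, Prod.snd_sub] at hN'
      simp only [hq]
      linarith
    · refine Filter.Eventually.of_forall fun p => ?_
      constructor
      · simp only [hq]
        fun_prop
      · simp only [hq]
        fun_prop
  have hmain := hsup.2 y hy q htest
  have hd : deriv (fun t => q (t, y.2)) y.1 = π (1, 0) := by
    have heq : (fun t => q (t, y.2)) = fun t => v y
        + (t - y.1) * π (1, 0) + ((1 / 2) * X (1, 0) (1, 0) - η) * (t - y.1) ^ 2 := by
      funext t
      have e : ((t, y.2) : ℝ × (Fin n → ℂ)) - y = (t - y.1) • ((1, 0) : ℝ × (Fin n → ℂ)) := by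
        ext <;> simp
      simp only [hq, e, map_smul, _root_.smul_apply, smul_eq_mul, sub_self, map_zero]
      ring
    rw [heq]
    have h1 : HasDerivAt (fun t : ℝ => t - y.1) 1 y.1 := (hasDerivAt_id _).sub_const _
    have h3 := ((h1.mul_const (π (1, 0))).const_add (v y)).add
        ((h1.pow 2).const_mul ((1 / 2) * X (1, 0) (1, 0) - η))
    refine HasDerivAt.deriv (h3.congr_deriv ?_)
    simp
  have hBs : ∀ a b, B a b = B b a := by
    intro a b
    rw [hB, hB, hX, cmpEuc_symm]
  have hh : complexHessian (fun z => q (y.1, z)) y.2 = cmpHerm B := by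
    set ℓ : (Fin n → ℂ) →L[ℝ] ℝ := π.comp (ContinuousLinearMap.inr ℝ ℝ (Fin n → ℂ)) with hℓ
    have heq : (fun z => q (y.1, z)) = fun z => v y + ℓ (z - y.2)
        + (1 / 2) * B (z - y.2) (z - y.2) := by
      funext z
      have e : ((y.1, z) : ℝ × (Fin n → ℂ)) - y = (0, z - y.2) := by ext <;> simp
      have e3 : ℓ (z - y.2) = π (0, z - y.2) := by
        simp [hℓ]
      rw [hB, e3]
      simp only [hq, e]
      ring
    rw [heq]
    exact cmp_quad_hess _ _ _ hBs _
  rw [hd, hqy, hh] at hmain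
  exact hmain

theorem cmp_core {n : ℕ} (hn : 1 ≤ n) {Γ : Set (Fin n → ℝ)} {f : (Fin n → ℝ) → ℝ}
    (hΓ : IsGammaCone n Γ) (hf : IsHessianDensity n Γ f)
    {Ω : Set (Fin n → ℂ)} {T : ℝ}
    {G : ℝ → (Fin n → ℂ) → ℝ → ℝ} {g : (Fin n → ℂ) → ℝ} {u v : ℝ × (Fin n → ℂ) → ℝ}
    (hsub : ParSubsolOn f Γ G g (Set.Ioo 0 T ×ˢ Ω) u)
    (hsup : ParSupersolOn f Γ G g (Set.Ioo 0 T ×ˢ Ω) v)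
    {y y' : ℝ × (Fin n → ℂ)} (hy : y ∈ Set.Ioo 0 T ×ˢ Ω) (hy' : y' ∈ Set.Ioo 0 T ×ˢ Ω)
    {s R C₀ : ℝ} (hs0 : 0 < s) (hs1 : s < 1) (hR : 0 ≤ R) (hg : 0 ≤ g y.2)
    (hbig : Real.exp (G y.1 y.2 (u y)) * g y.2 + 1 ≤ f (fun _ => R))
    {π π' : ℝ × (Fin n → ℂ) →L[ℝ] ℝ}
    {X Y : ℝ × (Fin n → ℂ) →L[ℝ] ℝ × (Fin n → ℂ) →L[ℝ] ℝ} (hX : ∀ h k, X h k = X k h)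
    (hY : ∀ h k, Y h k = Y k h)
    (hXu : ∀ η > 0, ∀ᶠ h in 𝓝 (0 : ℝ × (Fin n → ℂ)),
      (1 - s) * u (y + h) + s * cmpRho n T R C₀ (y + h) ≤
        (1 - s) * u y + s * cmpRho n T R C₀ y + π h + (1 / 2) * X h h + η * ‖h‖ ^ 2)
    (hYv : ∀ η > 0, ∀ᶠ h in 𝓝 (0 : ℝ × (Fin n → ℂ)),
      v y' + π' h + (1 / 2) * Y h h - η * ‖h‖ ^ 2 ≤ v (y' + h))
    (hXY : ∀ h, X h h ≤ Y h h) :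
    Real.exp (π (1, 0) + G y.1 y.2 (u y)) * g y.2 + s ≤
      Real.exp (π' (1, 0) + G y'.1 y'.2 (v y')) * g y'.2 := by
  have hs' : 0 < 1 - s := by linarith
  have hη : 0 < s / 2 := by linarith
  set ι := ContinuousLinearMap.inr ℝ ℝ (Fin n → ℂ) with hι
  set B₁ : (Fin n → ℂ) →L[ℝ] (Fin n → ℂ) →L[ℝ] ℝ :=
    (1 - s)⁻¹ • (X.bilinearComp ι ι + (s / 2 - s * (R + 1)) • cmpEuc n) with hB₁
  set B₂ : (Fin n → ℂ) →L[ℝ] (Fin n → ℂ) →L[ℝ] ℝ :=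
    Y.bilinearComp ι ι - (s / 2) • cmpEuc n with hB₂
  have e₁ : ∀ a b, B₁ a b =
      (1 - s)⁻¹ * (X (0, a) (0, b) + (s / 2 - s * (R + 1)) * cmpEuc n a b) := by
    intro a b
    simp [hB₁, hι, mul_add]
  have e₂ : ∀ a b, B₂ a b = Y (0, a) (0, b) - (s / 2) * cmpEuc n a b := by
    intro a b
    simp [hB₂, hι]
  have t₁ := cmp_test_sub hsub hy hs1 hη hX (hXu _ hη) e₁
  have t₂ := cmp_test_sup hsup hy' hη hY (hYv _ hη) e₂
  have H₁ : (cmpHerm B₁).IsHermitian :=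
    cmpHerm_isHermitian _ fun a b => by rw [e₁, e₁, hX, cmpEuc_symm]
  have H₂ : (cmpHerm B₂).IsHermitian :=
    cmpHerm_isHermitian _ fun a b => by rw [e₂, e₂, hY, cmpEuc_symm]
  have hΓ₁ : H₁.eigenvalues ∈ closure Γ := by
    by_contra hcon
    rw [Fop, dif_pos H₁, if_neg hcon] at t₁
    exact absurd (le_bot_iff.1 t₁) (EReal.coe_ne_bot _)
  have hsp := cmp_spectral hn hΓ hf H₁ H₂ hΓ₁ hs0.le hs1.le hR (by
    intro x
    rw [cmpHerm_quad, cmpHerm_quad, e₁, e₁, e₂, e₂]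
    have hE := cmpEuc_herm x
    have k1 := hXY (0, star x)
    have k2 := hXY (0, Complex.I • star x)
    have hS : 0 ≤ ∑ i, ‖x i‖ ^ 2 := Finset.sum_nonneg fun i _ => by positivity
    have hc : (1 - s) * (1 / 4 * ((1 - s)⁻¹ * (X (0, star x) (0, star x)
        + (s / 2 - s * (R + 1)) * cmpEuc n (star x) (star x))
        + (1 - s)⁻¹ * (X (0, Complex.I • star x) (0, Complex.I • star x)
        + (s / 2 - s * (R + 1)) * cmpEuc n (Complex.I • star x) (Complex.I • star x)))) =
        (1 / 4) * (X (0, star x) (0, star x) + X (0, Complex.I • star x) (0, Complex.I • star x))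
        + (s / 2 - s * (R + 1)) * ∑ i, ‖x i‖ ^ 2 := by
      rw [← hE]
      field_simp
      ring
    rw [hc]
    have hc2 : (1 / 4 : ℝ) * (Y (0, star x) (0, star x) - s / 2 * cmpEuc n (star x) (star x)
        + (Y (0, Complex.I • star x) (0, Complex.I • star x)
          - s / 2 * cmpEuc n (Complex.I • star x) (Complex.I • star x))) =
        (1 / 4) * (Y (0, star x) (0, star x) + Y (0, Complex.I • star x) (0, Complex.I • star x))
        - s / 2 * ∑ i, ‖x i‖ ^ 2 := by
      rw [← hE]
      ring
    rw [hc2]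
    nlinarith)
  rw [Fop, dif_pos H₁, if_pos hΓ₁, EReal.coe_le_coe_iff] at t₁
  rw [Fop, dif_pos H₂, if_pos hsp.1, EReal.coe_le_coe_iff] at t₂
  refine le_trans ?_ t₂
  refine le_trans ?_ hsp.2
  set a := (1 - s)⁻¹ * (π (1, 0) + s * ((T - y.1) ^ 2)⁻¹) with ha
  have ha' : π (1, 0) ≤ (1 - s) * a := by
    rw [ha, ← mul_assoc, mul_inv_cancel₀ hs'.ne', one_mul]
    have : 0 ≤ s * ((T - y.1) ^ 2)⁻¹ := by positivity
    linarith
  have hconv : Real.exp (π (1, 0) + G y.1 y.2 (u y)) ≤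
      (1 - s) * Real.exp (a + G y.1 y.2 (u y)) + s * Real.exp (G y.1 y.2 (u y)) := by
    have := convexOn_exp.2 (mem_univ (a + G y.1 y.2 (u y))) (mem_univ (G y.1 y.2 (u y)))
      hs'.le hs0.le (by ring)
    simp only [smul_eq_mul] at this
    refine le_trans (Real.exp_le_exp.2 ?_) this
    linarith
  have := mul_le_mul_of_nonneg_right hconv hg
  have h5 := mul_le_mul_of_nonneg_left t₁ hs'.le
  have h6 := mul_le_mul_of_nonneg_left hbig hs0.le
  nlinarith

end coreTools

section mainTools

theorem cmp_slope {a b L : ℝ} (h : ∀ᶠ τ in 𝓝 (0 : ℝ), τ * a + τ ^ 2 * b ≤ L * |τ|) : |a| ≤ L := by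
  have one : ∀ a : ℝ, (∀ᶠ τ in 𝓝 (0 : ℝ), τ * a + τ ^ 2 * b ≤ L * |τ|) → a ≤ L := by
    intro a h
    have ht : Tendsto (fun τ : ℝ => a + τ * b) (𝓝[>] 0) (𝓝 a) := by
      have : Continuous fun τ : ℝ => a + τ * b := by fun_prop
      simpa using (this.tendsto 0).mono_left nhdsWithin_le_nhds
    refine le_of_tendsto ht ?_
    filter_upwards [nhdsWithin_le_nhds h, self_mem_nhdsWithin] with τ h1 h2
    have h2' : 0 < τ := h2
    rw [abs_of_pos h2'] at h1
    have : τ * (a + τ * b) ≤ τ * L := by nlinarith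
    exact le_of_mul_le_mul_left this h2'
  rw [abs_le]
  refine ⟨?_, one a h⟩
  have hneg : Tendsto (fun τ : ℝ => -τ) (𝓝 0) (𝓝 0) := by
    simpa using (continuous_neg (G := ℝ)).tendsto 0
  have := one (-a) (by
    filter_upwards [hneg.eventually h] with τ hτ
    rw [abs_neg] at hτ
    linarith)
  linarith

theorem cmp_ultra {X : Type*} [TopologicalSpace X] (l : Ultrafilter ℕ) {C : Set X}
    (hC : IsCompact C) {w : ℕ → X} (hw : ∀ᶠ k in (l : Filter ℕ), w k ∈ C) :
    ∃ x ∈ C, Tendsto w l (𝓝 x) := by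
  obtain ⟨x, hx, h⟩ := hC.ultrafilter_le_nhds (l.map w) (by
    rw [le_principal_iff]; exact hw)
  exact ⟨x, hx, h⟩

end mainTools

/-- comparison principle for sub/supersolutions that are locally Lipschitz in time. -/
theorem stmt14
    {n : ℕ} (hn : 1 ≤ n) (Γ : Set (Fin n → ℝ)) (f : (Fin n → ℝ) → ℝ)
    (hΓ : IsGammaCone n Γ) (hf : IsHessianDensity n Γ f)
    (Ω : Set (Fin n → ℂ)) (hΩo : IsOpen Ω) (hΩb : Bornology.IsBounded Ω)
    (hΩc : IsConnected Ω) (T : ℝ) (hT : 0 < T)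
    (G : ℝ → (Fin n → ℂ) → ℝ → ℝ)
    (hGc : ContinuousOn (fun p : ℝ × (Fin n → ℂ) × ℝ => G p.1 p.2.1 p.2.2)
      (Set.Icc 0 T ×ˢ closure Ω ×ˢ Set.univ))
    (hGm : ∀ t z, Monotone (fun r => G t z r))
    (g : (Fin n → ℂ) → ℝ) (hgc : ContinuousOn g Ω)
    (hg0 : ∀ z ∈ Ω, 0 ≤ g z) (hgb : ∃ C, ∀ z ∈ Ω, g z ≤ C)
    (hflim : Filter.Tendsto (fun R : ℝ => f (fun _ => R)) Filter.atTop Filter.atTop)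
    (u v : ℝ × (Fin n → ℂ) → ℝ)
    (husc : UpperSemicontinuousOn u (Set.Ico 0 T ×ˢ closure Ω))
    (hub : ∃ C, ∀ p ∈ Set.Ico 0 T ×ˢ closure Ω, |u p| ≤ C)
    (hvlsc : LowerSemicontinuousOn v (Set.Ico 0 T ×ˢ closure Ω))
    (hvb : ∃ C, ∀ p ∈ Set.Ico 0 T ×ˢ closure Ω, |v p| ≤ C)
    (hsub : ParSubsolOn f Γ G g (Set.Ioo 0 T ×ˢ Ω) u)
    (hsup : ParSupersolOn f Γ G g (Set.Ioo 0 T ×ˢ Ω) v)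
    (hulip : ∀ p ∈ Set.Ioo 0 T ×ˢ Ω, ∃ ε > 0, ∃ L : ℝ, ∀ t₁ t₂ : ℝ, ∀ z : Fin n → ℂ,
      |t₁ - p.1| < ε → |t₂ - p.1| < ε → dist z p.2 < ε →
      |u (t₁, z) - u (t₂, z)| ≤ L * |t₁ - t₂|)
    (hvlip : ∀ p ∈ Set.Ioo 0 T ×ˢ Ω, ∃ ε > 0, ∃ L : ℝ, ∀ t₁ t₂ : ℝ, ∀ z : Fin n → ℂ,
      |t₁ - p.1| < ε → |t₂ - p.1| < ε → dist z p.2 < ε →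
      |v (t₁, z) - v (t₂, z)| ≤ L * |t₁ - t₂|) :
    ∀ p ∈ Set.Ioo 0 T ×ˢ Ω,
      u p - v p ≤ sSup ((fun q => max (u q - v q) 0) ''
        ((({0} : Set ℝ) ×ˢ closure Ω) ∪ (Set.Ioo 0 T ×ˢ frontier Ω))) := by
  intro p₀ hp₀
  by_contra hcon
  rw [not_le] at hcon
  set S := sSup ((fun q => max (u q - v q) 0) ''
        ((({0} : Set ℝ) ×ˢ closure Ω) ∪ (Set.Ioo 0 T ×ˢ frontier Ω))) with hSdef
  obtain ⟨Cu, hCu⟩ := hub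
  obtain ⟨Cv, hCv⟩ := hvb
  obtain ⟨Cg, hCg⟩ := hgb
  obtain ⟨M, hM0, hMu, hMv⟩ : ∃ M : ℝ, 0 ≤ M ∧
      (∀ p ∈ Set.Ico 0 T ×ˢ closure Ω, |u p| ≤ M) ∧
      (∀ p ∈ Set.Ico 0 T ×ˢ closure Ω, |v p| ≤ M) :=
    ⟨max (max Cu Cv) 0, le_max_right _ _,
      fun p hp => (hCu p hp).trans ((le_max_left _ _).trans (le_max_left _ _)),
      fun p hp => (hCv p hp).trans ((le_max_right _ _).trans (le_max_left _ _))⟩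
  have hMu1 : ∀ p ∈ Set.Ico 0 T ×ˢ closure Ω, -M ≤ u p ∧ u p ≤ M := fun p hp => abs_le.1 (hMu p hp)
  have hMv1 : ∀ p ∈ Set.Ico 0 T ×ˢ closure Ω, -M ≤ v p ∧ v p ≤ M := fun p hp => abs_le.1 (hMv p hp)
  have hbdsub : ((({0} : Set ℝ) ×ˢ closure Ω) ∪ (Set.Ioo 0 T ×ˢ frontier Ω)) ⊆
      Set.Ico 0 T ×ˢ closure Ω := by
    rintro ⟨t, z⟩ (⟨h1, h2⟩ | ⟨h1, h2⟩)
    · have : t = 0 := h1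
      subst this
      exact ⟨⟨le_refl _, hT⟩, h2⟩
    · exact ⟨⟨h1.1.le, h1.2⟩, frontier_subset_closure h2⟩
  have hS : ∀ q ∈ ((({0} : Set ℝ) ×ˢ closure Ω) ∪ (Set.Ioo 0 T ×ˢ frontier Ω)),
      max (u q - v q) 0 ≤ S := by
    intro q hq
    refine le_csSup ?_ ⟨q, hq, rfl⟩
    refine ⟨2 * M, ?_⟩
    rintro _ ⟨q, hq, rfl⟩
    have h1 := hMu1 q (hbdsub hq)
    have h2 := hMv1 q (hbdsub hq)
    exact max_le (by linarith) (by linarith)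
  have hS0 : 0 ≤ S := (le_max_right _ _).trans
    (hS (0, p₀.2) (Or.inl ⟨rfl, subset_closure hp₀.2⟩))
  have hcl : IsCompact (closure Ω) := hΩb.isCompact_closure
  obtain ⟨MG, hMG⟩ : ∃ MG : ℝ, ∀ t ∈ Icc 0 T, ∀ z ∈ closure Ω, G t z M ≤ MG := by
    have hc : ContinuousOn (fun p : ℝ × (Fin n → ℂ) => G p.1 p.2 M) (Icc 0 T ×ˢ closure Ω) := by
      have h1 : ContinuousOn (fun p : ℝ × (Fin n → ℂ) => (p.1, p.2, M)) (Icc 0 T ×ˢ closure Ω) := by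
        fun_prop
      exact hGc.comp h1 fun p hp => ⟨hp.1, hp.2, mem_univ _⟩
    obtain ⟨b, hb⟩ := (isCompact_Icc.prod hcl).bddAbove_image hc
    exact ⟨b, fun t ht z hz => hb ⟨(t, z), ⟨ht, hz⟩, rfl⟩⟩
  obtain ⟨R, hRf, hR0⟩ := ((tendsto_atTop.1 hflim (Real.exp MG * max Cg 0 + 1)).and
    (eventually_ge_atTop 0)).exists
  have hbig : ∀ y ∈ Set.Ioo 0 T ×ˢ Ω, Real.exp (G y.1 y.2 (u y)) * g y.2 + 1 ≤
      f (fun _ => R) := by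
    intro y hy
    refine le_trans ?_ hRf
    have hyD : y ∈ Set.Ico 0 T ×ˢ closure Ω := ⟨⟨hy.1.1.le, hy.1.2⟩, subset_closure hy.2⟩
    have h1 : G y.1 y.2 (u y) ≤ MG :=
      (hGm _ _ (hMu1 y hyD).2).trans (hMG _ ⟨hy.1.1.le, hy.1.2.le⟩ _ hyD.2)
    have h2 : Real.exp (G y.1 y.2 (u y)) * g y.2 ≤ Real.exp MG * max Cg 0 :=
      mul_le_mul (Real.exp_le_exp.2 h1) ((hCg _ hy.2).trans (le_max_left _ _)) (hg0 _ hy.2)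
        (Real.exp_pos _).le
    linarith
  obtain ⟨C₁, hC₁⟩ : ∃ C₁ : ℝ, ∀ z ∈ closure Ω, (R + 1) * ((1 / 2) * cmpEuc n z z) ≤ C₁ := by
    have hc : Continuous (fun z : Fin n → ℂ => (R + 1) * ((1 / 2) * cmpEuc n z z)) := by fun_prop
    obtain ⟨b, hb⟩ := hcl.bddAbove_image hc.continuousOn
    exact ⟨b, fun z hz => hb ⟨z, hz, rfl⟩⟩
  set ρ := cmpRho n T R (C₁ + M) with hρ
  have hρle : ∀ p ∈ Set.Ico 0 T ×ˢ closure Ω, ρ p ≤ -M - (T - p.1)⁻¹ := by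
    intro p hp
    have := hC₁ p.2 hp.2
    simp only [hρ, cmpRho]
    linarith
  have hρc : ContinuousOn ρ (Set.Ico 0 T ×ˢ closure Ω) := by
    have h1 : ContinuousOn (fun p : ℝ × (Fin n → ℂ) => (T - p.1)⁻¹)
        (Set.Ico 0 T ×ˢ closure Ω) := by
      refine ContinuousOn.inv₀ (by fun_prop) ?_
      intro p hp
      have := hp.1.2
      exact (sub_pos.2 this).ne'
    have h2 : Continuous fun p : ℝ × (Fin n → ℂ) =>
        (R + 1) * ((1 / 2) * cmpEuc n p.2 p.2) - (C₁ + M) := by fun_prop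
    exact h2.continuousOn.sub h1
  set d := u p₀ - v p₀ - S with hd
  have hdpos : 0 < d := by rw [hd]; linarith
  obtain ⟨s, hs0, hs1, hsd⟩ : ∃ s : ℝ, 0 < s ∧ s < 1 ∧ s * (u p₀ - ρ p₀) < d / 2 := by
    have hW : 0 < |u p₀ - ρ p₀| + 1 := by positivity
    refine ⟨min (1 / 2) (d / (4 * (|u p₀ - ρ p₀| + 1))), by positivity,
      (min_le_left _ _).trans_lt (by norm_num), ?_⟩
    set s := min (1 / 2) (d / (4 * (|u p₀ - ρ p₀| + 1))) with hs
    have hs0 : 0 < s := by positivity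
    have h1 : s * (4 * (|u p₀ - ρ p₀| + 1)) ≤ d := by
      rw [← le_div_iff₀ (by positivity)]
      exact min_le_right _ _
    have h2 := mul_le_mul_of_nonneg_left (le_abs_self (u p₀ - ρ p₀)) hs0.le
    nlinarith
  set θ := d / 2 with hθ
  have hθ0 : 0 < θ := by positivity
  set U : ℝ × (Fin n → ℂ) → ℝ := fun p => (1 - s) * u p + s * ρ p with hUdef
  have hUp₀ : S + θ < U p₀ - v p₀ := by
    simp only [hUdef]
    nlinarith
  have hUle : ∀ p ∈ Set.Ico 0 T ×ˢ closure Ω, U p ≤ u p - s * (T - p.1)⁻¹ := by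
    intro p hp
    have h1 := mul_le_mul_of_nonneg_left (hρle p hp) hs0.le
    have h2 := mul_le_mul_of_nonneg_left (hMu1 p hp).1 hs0.le
    simp only [hUdef]
    linarith
  have hUle' : ∀ p ∈ Set.Ico 0 T ×ˢ closure Ω, U p ≤ u p := by
    intro p hp
    have h1 := hUle p hp
    have h2 : 0 ≤ s * (T - p.1)⁻¹ :=
      mul_nonneg hs0.le (inv_nonneg.2 (sub_nonneg.2 (le_of_lt hp.1.2)))
    linarith
  obtain ⟨T₁, hT₁0, hT₁T, hT₁s⟩ : ∃ T₁ : ℝ, p₀.1 < T₁ ∧ T₁ < T ∧ T - T₁ ≤ s / (2 * M + 1) := by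
    have h1 : p₀.1 < T := hp₀.1.2
    have h2 : 0 < s / (2 * M + 1) := by positivity
    refine ⟨max ((p₀.1 + T) / 2) (T - s / (2 * M + 1)), ?_, ?_, ?_⟩
    · exact lt_of_lt_of_le (by linarith) (le_max_left _ _)
    · exact max_lt (by linarith) (by linarith)
    · have := le_max_right ((p₀.1 + T) / 2) (T - s / (2 * M + 1))
      linarith
  have hp₀pos : 0 < p₀.1 := hp₀.1.1
  set K : Set (ℝ × (Fin n → ℂ)) := Icc 0 T₁ ×ˢ closure Ω with hKdef
  have hKc : IsCompact K := isCompact_Icc.prod hcl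
  have hKD : K ⊆ Set.Ico 0 T ×ˢ closure Ω := fun p hp => ⟨⟨hp.1.1, hp.1.2.trans_lt hT₁T⟩, hp.2⟩
  have hp₀K : p₀ ∈ K := ⟨⟨hp₀pos.le, hT₁0.le⟩, subset_closure hp₀.2⟩
  have hUusc : UpperSemicontinuousOn U K := by
    have h1 : UpperSemicontinuousOn (fun p => (1 - s) * u p) (Set.Ico 0 T ×ˢ closure Ω) := by
      have hc : Continuous fun r : ℝ => (1 - s) * r := by fun_prop
      have hm : Monotone fun r : ℝ => (1 - s) * r := fun a b hab =>
        mul_le_mul_of_nonneg_left hab (by linarith)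
      exact hc.comp_upperSemicontinuousOn husc hm
    have h2 : UpperSemicontinuousOn (fun p => s * ρ p) (Set.Ico 0 T ×ˢ closure Ω) :=
      (continuousOn_const.mul hρc).upperSemicontinuousOn
    exact (h1.add h2).mono hKD
  have hVlsc : LowerSemicontinuousOn v K := hvlsc.mono hKD
  have hpos : ∀ k : ℕ, (0 : ℝ) < (k : ℝ) + 1 := fun k => by positivity
  choose y hyK y' hyK' π π' X Y hX hY hU hV hπ hXY hmax using fun k : ℕ =>
    cmp_sums_P hKc ⟨p₀, hp₀K⟩ hUusc hVlsc (hpos k) (one_div_pos.2 (hpos k))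
  have hδ0 : Tendsto (fun k : ℕ => 1 / ((k : ℝ) + 1)) atTop (𝓝 0) :=
    tendsto_one_div_add_atTop_nhds_zero_nat
  set l : Ultrafilter ℕ := hyperfilter ℕ with hl
  have hlt : (l : Filter ℕ) ≤ atTop := Nat.hyperfilter_le_atTop
  have hδl := hδ0.mono_left hlt
  have hgap : ∀ k, S + θ < U (y k) - v (y' k) + 1 / ((k : ℝ) + 1) := by
    intro k
    have h1 := hmax k p₀ hp₀K
    have h2 : 0 ≤ ((k : ℝ) + 1) * ‖y k - y' k‖ ^ 2 := by positivity
    linarith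
  have hdist : Tendsto (fun k => ‖y k - y' k‖) atTop (𝓝 0) := by
    have hsq : Tendsto (fun k : ℕ => Real.sqrt ((2 * M + 1) * (1 / ((k : ℝ) + 1)))) atTop
        (𝓝 0) := by
      have := (Real.continuous_sqrt.tendsto _).comp (hδ0.const_mul (2 * M + 1))
      simpa [Function.comp_def] using this
    refine squeeze_zero (fun k => norm_nonneg _) (fun k => ?_) hsq
    apply Real.le_sqrt_of_sq_le
    have h1 := hmax k p₀ hp₀K
    have h2 := hUle' _ (hKD (hyK k))
    have h3 := hMu1 _ (hKD (hyK k))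
    have h4 := hMv1 _ (hKD (hyK' k))
    have h5 : 1 / ((k : ℝ) + 1) ≤ 1 := by
      rw [div_le_one (hpos k)]
      have : (0 : ℝ) ≤ k := by positivity
      linarith
    rw [mul_one_div, le_div_iff₀ (hpos k)]
    linarith
  obtain ⟨q, hqK, hyq⟩ := cmp_ultra l hKc (Eventually.of_forall hyK)
  have hyq' : Tendsto y' l (𝓝 q) := by
    have h1 : Tendsto (fun k => y k - y' k) l (𝓝 0) :=
      (tendsto_zero_iff_norm_tendsto_zero.2 hdist).mono_left hlt
    simpa using hyq.sub h1
  have hqgap : S + θ ≤ U q - v q := by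
    by_contra hc
    rw [not_le] at hc
    set e := S + θ - (U q - v q) with he
    have he0 : 0 < e := by rw [he]; linarith
    have h1 : ∀ᶠ k in (l : Filter ℕ), U (y k) < U q + e / 3 :=
      (tendsto_nhdsWithin_iff.2 ⟨hyq, Eventually.of_forall hyK⟩).eventually
        (hUusc q hqK (U q + e / 3) (by linarith))
    have h2 : ∀ᶠ k in (l : Filter ℕ), v q - e / 3 < v (y' k) :=
      (tendsto_nhdsWithin_iff.2 ⟨hyq', Eventually.of_forall hyK'⟩).eventually
        (hVlsc q hqK (v q - e / 3) (by linarith))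
    have h3 : ∀ᶠ k : ℕ in (l : Filter ℕ), 1 / ((k : ℝ) + 1) < e / 3 :=
      hδl.eventually (gt_mem_nhds (by positivity))
    obtain ⟨k, k1, k2, k3⟩ := (h1.and (h2.and h3)).exists
    have := hgap k
    linarith
  have hqO : q ∈ Ioo 0 T₁ ×ˢ Ω := by
    have hqD := hKD hqK
    have hqu := hUle' q hqD
    have h0 : q.1 ≠ 0 := by
      intro h0
      have h1 := hS q (Or.inl ⟨h0, hqK.2⟩)
      have h2 := le_max_left (u q - v q) 0
      linarith
    have hqpos : 0 < q.1 := lt_of_le_of_ne hqK.1.1 (Ne.symm h0)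
    have h1 : q.1 ≠ T₁ := by
      intro h1
      have h2 := hUle q hqD
      rw [h1] at h2
      have h3 : 2 * M + 1 ≤ s * (T - T₁)⁻¹ := by
        rw [← div_eq_mul_inv, le_div_iff₀ (by linarith)]
        rw [le_div_iff₀ (by linarith)] at hT₁s
        linarith
      have h4 := hMu1 q hqD
      have h5 := hMv1 q hqD
      linarith
    refine ⟨⟨hqpos, lt_of_le_of_ne hqK.1.2 h1⟩, ?_⟩
    by_contra h2
    have h3 : q.2 ∈ frontier Ω := by
      rw [hΩo.frontier_eq]
      exact ⟨hqK.2, h2⟩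
    have h4 := hS q (Or.inr ⟨⟨hqpos, hqD.1.2⟩, h3⟩)
    have h5 := le_max_left (u q - v q) 0
    linarith
  have hOo : IsOpen (Ioo 0 T₁ ×ˢ Ω : Set (ℝ × (Fin n → ℂ))) := isOpen_Ioo.prod hΩo
  have hOK : (Ioo 0 T₁ ×ˢ Ω : Set (ℝ × (Fin n → ℂ))) ⊆ K := fun p hp =>
    ⟨⟨hp.1.1.le, hp.1.2.le⟩, subset_closure hp.2⟩
  have hOT : (Ioo 0 T₁ ×ˢ Ω : Set (ℝ × (Fin n → ℂ))) ⊆ Ioo 0 T ×ˢ Ω := fun p hp =>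
    ⟨⟨hp.1.1, hp.1.2.trans hT₁T⟩, hp.2⟩
  have hyO : ∀ᶠ k in (l : Filter ℕ), y k ∈ Ioo 0 T₁ ×ˢ Ω := hyq.eventually (hOo.mem_nhds hqO)
  have hyO' : ∀ᶠ k in (l : Filter ℕ), y' k ∈ Ioo 0 T₁ ×ˢ Ω := hyq'.eventually (hOo.mem_nhds hqO)
  have hloc : ∀ x ∈ (Ioo 0 T₁ ×ˢ Ω : Set (ℝ × (Fin n → ℂ))),
      ∀ᶠ h in 𝓝 (0 : ℝ × (Fin n → ℂ)), x + h ∈ K := by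
    intro x hx
    have ht : Tendsto (fun h : ℝ × (Fin n → ℂ) => x + h) (𝓝 0) (𝓝 x) := by
      have : Continuous fun h : ℝ × (Fin n → ℂ) => x + h := by fun_prop
      simpa using this.tendsto 0
    filter_upwards [ht.eventually (hOo.mem_nhds hx)] with h hh using hOK hh
  obtain ⟨ε, hε, L, hL⟩ := hvlip q (hOT hqO)
  have hslope : ∀ᶠ k in (l : Filter ℕ), π' k (1, 0) ∈ Icc (-L) L := by
    have hball : ∀ᶠ k in (l : Filter ℕ), dist (y' k) q < ε / 2 :=
      hyq'.eventually (Metric.ball_mem_nhds q (by positivity))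
    filter_upwards [hball, hyO'] with k hk hkO
    rw [mem_Icc, ← abs_le]
    apply cmp_slope (b := (1 / 2) * Y k (1, 0) (1, 0) - ‖((1, 0) : ℝ × (Fin n → ℂ))‖ ^ 2)
    have hray : Tendsto (fun τ : ℝ => τ • ((1, 0) : ℝ × (Fin n → ℂ))) (𝓝 0) (𝓝 0) := by
      have : Continuous fun τ : ℝ => τ • ((1, 0) : ℝ × (Fin n → ℂ)) := by fun_prop
      simpa using this.tendsto 0
    have hsm : ∀ᶠ τ in 𝓝 (0 : ℝ), |τ| < ε / 2 := by
      have := Metric.ball_mem_nhds (0 : ℝ) (half_pos hε)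
      filter_upwards [this] with τ hτ
      simpa using hτ
    filter_upwards [hray.eventually (hV k 1 one_pos), hray.eventually (hloc _ hkO), hsm]
      with τ h1 h2 h3
    have h4 := h1 h2
    have hd1 : |(y' k).1 - q.1| < ε / 2 := by
      have := (Prod.dist_eq (x := y' k) (y := q))
      have h6 := le_max_left (dist (y' k).1 q.1) (dist (y' k).2 q.2)
      rw [← Prod.dist_eq, Real.dist_eq] at h6
      linarith
    have hd2 : dist (y' k).2 q.2 < ε := by
      have h6 := le_max_right (dist (y' k).1 q.1) (dist (y' k).2 q.2)
      rw [← Prod.dist_eq] at h6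
      linarith
    have h5 := hL ((y' k).1 + τ) (y' k).1 (y' k).2 (by
      have := abs_add_le ((y' k).1 - q.1) τ
      have e : (y' k).1 + τ - q.1 = ((y' k).1 - q.1) + τ := by ring
      rw [e]; linarith) (by linarith) hd2
    have e1 : y' k + τ • ((1, 0) : ℝ × (Fin n → ℂ)) = ((y' k).1 + τ, (y' k).2) := by
      ext <;> simp
    rw [e1] at h4
    simp only [map_smul, _root_.smul_apply, smul_eq_mul, norm_smul, Real.norm_eq_abs, mul_pow,
      sq_abs] at h4
    rw [add_sub_cancel_left] at h5
    have h7 := (abs_le.1 h5).2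
    have e2 : v ((y' k).1, (y' k).2) = v (y' k) := rfl
    rw [e2] at h7
    nlinarith
  obtain ⟨a, -, ha⟩ := cmp_ultra l isCompact_Icc hslope
  obtain ⟨r, -, hr⟩ := cmp_ultra l (isCompact_Icc (a := -M) (b := M))
    (w := fun k => v (y' k)) (Eventually.of_forall fun k => hMv1 _ (hKD (hyK' k)))
  have ha' : Tendsto (fun k => π k (1, 0)) l (𝓝 a) := by
    have h1 : Tendsto (fun k => π k (1, 0) - π' k (1, 0)) l (𝓝 0) := by
      have h2 : Tendsto (fun k : ℕ => 1 / ((k : ℝ) + 1) * ‖((1, 0) : ℝ × (Fin n → ℂ))‖) l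
          (𝓝 0) := by
        simpa using hδl.mul_const ‖((1, 0) : ℝ × (Fin n → ℂ))‖
      exact squeeze_zero_norm (fun k => hπ k (1, 0)) h2
    simpa using h1.add ha
  have hineq : ∀ᶠ k in (l : Filter ℕ),
      Real.exp (π k (1, 0) + G (y k).1 (y k).2 (v (y' k))) * g (y k).2 + s ≤
        Real.exp (π' k (1, 0) + G (y' k).1 (y' k).2 (v (y' k))) * g (y' k).2 := by
    have h3 : ∀ᶠ k : ℕ in (l : Filter ℕ), 1 / ((k : ℝ) + 1) < θ :=
      hδl.eventually (gt_mem_nhds hθ0)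
    filter_upwards [hyO, hyO', h3] with k hk hk' hkθ
    have hg : 0 ≤ g (y k).2 := hg0 _ hk.2
    have hcore := cmp_core hn hΓ hf hsub hsup (hOT hk) (hOT hk') (C₀ := C₁ + M) hs0 hs1 hR0 hg
      (hbig _ (hOT hk)) (hX k) (hY k)
      (fun η hη => by
        filter_upwards [hU k η hη, hloc _ hk] with h h1 h2 using h1 h2)
      (fun η hη => by
        filter_upwards [hV k η hη, hloc _ hk'] with h h1 h2 using h1 h2) (hXY k)
    refine le_trans ?_ hcore
    have h4 : v (y' k) ≤ u (y k) := by
      have h5 := hgap k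
      have h6 := hUle' _ (hKD (hyK k))
      linarith
    have h7 := hGm (y k).1 (y k).2 h4
    have h8 := mul_le_mul_of_nonneg_right
      (Real.exp_le_exp.2 (add_le_add_right h7 (π k (1, 0)))) hg
    simpa using h8
  have hGt : ∀ w : ℕ → ℝ × (Fin n → ℂ), (∀ k, w k ∈ K) → Tendsto w l (𝓝 q) →
      Tendsto (fun k => G (w k).1 (w k).2 (v (y' k))) l (𝓝 (G q.1 q.2 r)) := by
    intro w hwK hw
    have hqdom : (q.1, q.2, r) ∈ (Set.Icc 0 T ×ˢ closure Ω ×ˢ Set.univ :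
        Set (ℝ × (Fin n → ℂ) × ℝ)) := ⟨⟨hqK.1.1, hqK.1.2.trans hT₁T.le⟩, hqK.2, mem_univ _⟩
    have h1 := hGc _ hqdom
    have h2 : Tendsto (fun k => ((w k).1, (w k).2, v (y' k))) l (𝓝 (q.1, q.2, r)) :=
      ((continuous_fst.tendsto q).comp hw).prodMk_nhds
        (((continuous_snd.tendsto q).comp hw).prodMk_nhds hr)
    exact h1.tendsto.comp (tendsto_nhdsWithin_iff.2 ⟨h2, Eventually.of_forall fun k =>
      ⟨⟨(hwK k).1.1, (hwK k).1.2.trans hT₁T.le⟩, (hwK k).2, mem_univ _⟩⟩)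
  have hgt : ∀ w : ℕ → ℝ × (Fin n → ℂ), Tendsto w l (𝓝 q) →
      Tendsto (fun k => g (w k).2) l (𝓝 (g q.2)) := by
    intro w hw
    exact (hgc.continuousAt (hΩo.mem_nhds hqO.2)).tendsto.comp ((continuous_snd.tendsto q).comp hw)
  have hl1 := (((Real.continuous_exp.tendsto _).comp (ha'.add (hGt y hyK hyq))).mul
    (hgt y hyq)).add_const s
  have hl2 := ((Real.continuous_exp.tendsto _).comp (ha.add (hGt y' hyK' hyq'))).mul
    (hgt y' hyq')
  have := le_of_tendsto_of_tendsto hl1 hl2 hineq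
  linarith
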